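/- arXiv:1702.02095 — 7 statements merged into one kernel-verified Lean document; each statement's English description precedes it below -/
import Mathlib

section
/- Let n > 4 and 2 ≤ k < n/2 with n odd, and suppose the binomial coefficient C(n,k) is even. Then the Kneser graph K(n,k) is not a Cayley graph; that is, no subgroup of the automorphism group of K(n,k) acts regularly (i.e., freely and transitively) on the vertex set of K(n,k). -/
/-- The Kneser graph `K(n,k)`: vertices are the `k`-element subsets of `Fin n`,
with two vertices adjacent iff the corresponding subsets are disjoint. -/
def kneserGraph (n k : ℕ) : SimpleGraph {s : Finset (Fin n) // s.card = k} :=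
  SimpleGraph.fromRel (fun v w => Disjoint v.val w.val)

/-- A graph is a Cayley graph iff some subgroup of its automorphism group acts
regularly (freely and transitively) on the vertex set. -/
def IsCayleyGraph {V : Type*} (G : SimpleGraph V) : Prop :=
  ∃ H : Subgroup (G ≃g G), ∀ v w : V, ∃! g : H, (g : G ≃g G) v = w

abbrev KLayer (n j : ℕ) := {s : Finset (Fin n) // s.card = j}

/-- a set is determined by its supersets of size one more -/
lemma kl_eq_of_forall_super {n j : ℕ} (hj : j + 2 ≤ n) (S T : KLayer n j)
    (h : ∀ A : KLayer n (j+1), S.1 ⊆ A.1 → T.1 ⊆ A.1) : T = S := by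
  have hTS : T.1 ⊆ S.1 := by
    intro x hx
    by_contra hxS
    have hc : (insert x S.1).card < (Finset.univ : Finset (Fin n)).card := by
      rw [Finset.card_insert_of_notMem hxS, S.2, Finset.card_univ, Fintype.card_fin]; omega
    obtain ⟨y, -, hy⟩ := Finset.exists_mem_notMem_of_card_lt_card hc
    rw [Finset.mem_insert, not_or] at hy
    have := h ⟨insert y S.1, by rw [Finset.card_insert_of_notMem hy.2, S.2]⟩
      (Finset.subset_insert _ _) hx
    rw [Finset.mem_insert] at this
    rcases this with h1 | h1
    · exact hy.1 h1.symm
    · exact hxS h1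
  exact Subtype.ext (Finset.eq_of_subset_of_card_le hTS (by rw [S.2, T.2]))

/-- a set is covered by its subsets of size one less -/
lemma kl_subset_of_forall_sub {n j : ℕ} (hj : 1 ≤ j) (U : KLayer n (j+1)) (W : Finset (Fin n))
    (h : ∀ A : KLayer n j, A.1 ⊆ U.1 → A.1 ⊆ W) : U.1 ⊆ W := by
  intro x hx
  obtain ⟨A, hxA, hAU, hA⟩ := Finset.exists_subsuperset_card_eq (s := {x}) (t := U.1) (n := j)
    (by simpa using hx) (by simpa using hj) (by rw [U.2]; omega)
  exact h ⟨A, hA⟩ hAU (hxA (by simp))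

/-- three sets pairwise spanning a set of size one more, but not all three -/
lemma kl_triple {n j : ℕ} (A B C : Finset (Fin n)) (hA : A.card = j+1) (hB : B.card = j+1)
    (hC : C.card = j+1)
    (U V W : Finset (Fin n)) (hU : U.card = j+2) (hV : V.card = j+2) (hW : W.card = j+2) (hAB : A ≠ B)
    (hAU : A ⊆ U) (hBU : B ⊆ U) (hAV : A ⊆ V) (hCV : C ⊆ V) (hBW : B ⊆ W) (hCW : C ⊆ W)
    (hCU : ¬ C ⊆ U) : A ∩ B ⊆ C := by
  obtain ⟨c, hc, hcU⟩ := Finset.not_subset.1 hCU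
  have hcA : c ∉ A := fun h => hcU (hAU h)
  have hcB : c ∉ B := fun h => hcU (hBU h)
  have hV' : insert c A = V := Finset.eq_of_subset_of_card_le
    (Finset.insert_subset (hCV hc) hAV) (by rw [Finset.card_insert_of_notMem hcA]; omega)
  have hW' : insert c B = W := Finset.eq_of_subset_of_card_le
    (Finset.insert_subset (hCW hc) hBW) (by rw [Finset.card_insert_of_notMem hcB]; omega)
  have hsub : C ⊆ insert c (A ∩ B) := by
    intro x hx
    have h1 := hCV hx
    have h2 := hCW hx
    rw [← hV'] at h1
    rw [← hW'] at h2
    simp only [Finset.mem_insert, Finset.mem_inter] at *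
    tauto
  have hlt : (A ∩ B).card < j + 1 := by
    by_contra hge
    have h1 : A ∩ B = A := Finset.eq_of_subset_of_card_le Finset.inter_subset_left (by omega)
    have h2 : A ∩ B = B := Finset.eq_of_subset_of_card_le Finset.inter_subset_right (by omega)
    exact hAB (h1.symm.trans h2)
  have : C = insert c (A ∩ B) := Finset.eq_of_subset_of_card_le hsub
    ((Finset.card_insert_le _ _).trans (by omega))
  rw [this]
  exact Finset.subset_insert _ _

lemma kl_star {n j : ℕ} (hj : j + 2 ≤ n) (f : KLayer n (j+1) ≃ KLayer n (j+1))
    (g : KLayer n (j+2) ≃ KLayer n (j+2))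
    (h : ∀ A U, A.1 ⊆ U.1 ↔ (f A).1 ⊆ (g U).1) (S : KLayer n j) :
    ∃ S' : KLayer n j, ∀ A : KLayer n (j+1), S.1 ⊆ A.1 → S'.1 ⊆ (f A).1 := by
  have hc : 1 < (S.1ᶜ).card := by
    rw [Finset.card_compl, S.2, Fintype.card_fin]; omega
  obtain ⟨a, ha, b, hb, hab⟩ := Finset.one_lt_card.1 hc
  rw [Finset.mem_compl] at ha hb
  have key : ∀ x y, x ∉ S.1 → y ∉ S.1 → x ≠ y → (insert x (insert y S.1)).card = j + 2 := by
    intro x y hx hy hxy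
    rw [Finset.card_insert_of_notMem (by simp [hx, hxy]), Finset.card_insert_of_notMem hy, S.2]
  let A : KLayer n (j+1) := ⟨insert a S.1, by rw [Finset.card_insert_of_notMem ha, S.2]⟩
  let B : KLayer n (j+1) := ⟨insert b S.1, by rw [Finset.card_insert_of_notMem hb, S.2]⟩
  let U : KLayer n (j+2) := ⟨_, key a b ha hb hab⟩
  have hAU : A.1 ⊆ U.1 := Finset.insert_subset_insert _ (Finset.subset_insert _ _)
  have hBU : B.1 ⊆ U.1 := Finset.subset_insert _ _
  have hAB : A ≠ B := by
    intro e
    have : a ∈ B.1 := by rw [← e]; exact Finset.mem_insert_self _ _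
    rcases Finset.mem_insert.1 this with h1 | h1
    · exact hab h1
    · exact ha h1
  have hfAB : (f A).1 ≠ (f B).1 := fun e => hAB (f.injective (Subtype.ext e))
  have hcard : ((f A).1 ∩ (f B).1).card = j := by
    have h1 := Finset.card_union_add_card_inter (f A).1 (f B).1
    have h2 : ((f A).1 ∪ (f B).1).card ≤ j + 2 := by
      rw [← (g U).2]
      exact Finset.card_le_card (Finset.union_subset ((h _ _).1 hAU) ((h _ _).1 hBU))
    have hlt : ((f A).1 ∩ (f B).1).card < j + 1 := by
      by_contra hge
      have h1 : (f A).1 ∩ (f B).1 = (f A).1 :=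
        Finset.eq_of_subset_of_card_le Finset.inter_subset_left (by rw [(f A).2]; omega)
      have h2 : (f A).1 ∩ (f B).1 = (f B).1 :=
        Finset.eq_of_subset_of_card_le Finset.inter_subset_right (by rw [(f B).2]; omega)
      exact hfAB (h1.symm.trans h2)
    rw [(f A).2, (f B).2] at h1
    omega
  refine ⟨⟨_, hcard⟩, ?_⟩
  intro C hSC
  by_cases hCA : C = A
  · rw [hCA]; exact Finset.inter_subset_left
  by_cases hCB : C = B
  · rw [hCB]; exact Finset.inter_subset_right
  obtain ⟨c, hcS, hcC⟩ : ∃ c, c ∉ S.1 ∧ C.1 = insert c S.1 := by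
    have : S.1.card < C.1.card := by rw [S.2, C.2]; omega
    obtain ⟨c, hc, hcS⟩ := Finset.exists_mem_notMem_of_card_lt_card this
    refine ⟨c, hcS, (Finset.eq_of_subset_of_card_le (Finset.insert_subset hc hSC) ?_).symm⟩
    rw [Finset.card_insert_of_notMem hcS, S.2, C.2]
  have hac : a ≠ c := by
    rintro rfl; exact hCA (Subtype.ext hcC)
  have hbc : b ≠ c := by
    rintro rfl; exact hCB (Subtype.ext hcC)
  let V : KLayer n (j+2) := ⟨_, key a c ha hcS hac⟩
  let W : KLayer n (j+2) := ⟨_, key b c hb hcS hbc⟩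
  have hAV : A.1 ⊆ V.1 := Finset.insert_subset_insert _ (Finset.subset_insert _ _)
  have hCV : C.1 ⊆ V.1 := by rw [hcC]; exact Finset.subset_insert _ _
  have hBW : B.1 ⊆ W.1 := Finset.insert_subset_insert _ (Finset.subset_insert _ _)
  have hCW : C.1 ⊆ W.1 := by rw [hcC]; exact Finset.subset_insert _ _
  have hCU : ¬ C.1 ⊆ U.1 := by
    intro hs
    have : c ∈ U.1 := hs (by rw [hcC]; exact Finset.mem_insert_self _ _)
    simp only [U, Finset.mem_insert] at this
    rcases this with h1 | h1 | h1
    · exact hac h1.symm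
    · exact hbc h1.symm
    · exact hcS h1
  exact kl_triple _ _ _ (f A).2 (f B).2 (f C).2 _ _ _ (g U).2 (g V).2 (g W).2 hfAB
    ((h _ _).1 hAU) ((h _ _).1 hBU) ((h _ _).1 hAV) ((h _ _).1 hCV) ((h _ _).1 hBW)
    ((h _ _).1 hCW) (fun e => hCU ((h _ _).2 e))

lemma kl_step {n j : ℕ} (hj : j + 2 ≤ n) (f : KLayer n (j+1) ≃ KLayer n (j+1))
    (g : KLayer n (j+2) ≃ KLayer n (j+2))
    (h : ∀ A U, A.1 ⊆ U.1 ↔ (f A).1 ⊆ (g U).1) :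
    ∃ f' : KLayer n j ≃ KLayer n j, ∀ S A, S.1 ⊆ A.1 ↔ (f' S).1 ⊆ (f A).1 := by
  choose p hp using kl_star hj f g h
  have h' : ∀ A U, A.1 ⊆ U.1 ↔ (f.symm A).1 ⊆ (g.symm U).1 := by
    intro A U
    rw [h (f.symm A), f.apply_symm_apply, g.apply_symm_apply]
  choose q hq using kl_star hj f.symm g.symm h'
  have hqp : ∀ S, q (p S) = S := by
    intro S
    refine kl_eq_of_forall_super hj _ _ fun A hA => ?_
    simpa using hq _ _ (hp S A hA)
  have hpq : ∀ S, p (q S) = S := by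
    intro S
    refine kl_eq_of_forall_super hj _ _ fun A hA => ?_
    simpa using hp _ _ (hq S A hA)
  refine ⟨⟨p, q, hqp, hpq⟩, fun S A => ⟨hp S A, fun hs => ?_⟩⟩
  have := hq _ _ hs
  simpa [hqp] using this

lemma kl_perm {n : ℕ} (j : ℕ) (hj : j + 2 ≤ n) (f : KLayer n (j+1) ≃ KLayer n (j+1))
    (g : KLayer n (j+2) ≃ KLayer n (j+2))
    (h : ∀ A U, A.1 ⊆ U.1 ↔ (f A).1 ⊆ (g U).1) :
    ∃ σ : Equiv.Perm (Fin n), ∀ A, (f A).1 = A.1.map σ.toEmbedding := by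
  induction j with
  | zero =>
    have hs : ∀ x : Fin n, ∃ y, (f ⟨{x}, by simp⟩).1 = {y} := fun x =>
      Finset.card_eq_one.1 (f ⟨{x}, by simp⟩).2
    choose s hs using hs
    have hinj : Function.Injective s := by
      intro x y hxy
      have : (f ⟨{x}, by simp⟩) = (f ⟨{y}, by simp⟩) := Subtype.ext (by rw [hs, hs, hxy])
      have := congrArg Subtype.val (f.injective this)
      simpa using this
    refine ⟨Equiv.ofBijective s (Finite.injective_iff_bijective.1 hinj), ?_⟩
    rintro ⟨A, hA⟩
    obtain ⟨x, rfl⟩ := Finset.card_eq_one.1 hA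
    rw [hs]; simp
  | succ j ih =>
    obtain ⟨f', hf'⟩ := kl_step hj f g h
    obtain ⟨σ, hσ⟩ := ih (by omega) f' f hf'
    refine ⟨σ, fun A => ?_⟩
    symm
    apply Finset.eq_of_subset_of_card_le
    · rw [Finset.map_subset_iff_subset_preimage]
      refine kl_subset_of_forall_sub (by omega) A _ fun B hB => ?_
      rw [← Finset.map_subset_iff_subset_preimage, ← hσ]
      exact (hf' _ _).1 hB
    · rw [Finset.card_map, (f A).2, A.2]

lemma kl_choose_inj {a b k : ℕ} (hk : 1 ≤ k) (hb : k ≤ b) (h : a.choose k = b.choose k) :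
    a = b := by
  have key : ∀ {x y : ℕ}, x < y → k ≤ y → x.choose k < y.choose k := by
    intro x y hxy hy
    obtain ⟨y, rfl⟩ : ∃ z, y = z + 1 := ⟨y - 1, by omega⟩
    obtain ⟨k, rfl⟩ : ∃ z, k = z + 1 := ⟨k - 1, by omega⟩
    have h1 : x.choose (k+1) ≤ y.choose (k+1) := Nat.choose_le_choose _ (by omega)
    have h2 : 0 < y.choose k := Nat.choose_pos (by omega)
    rw [Nat.choose_succ_succ']
    omega
  rcases lt_trichotomy a b with h1 | h1 | h1
  · exact absurd h (key h1 hb).ne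
  · exact h1
  · exact absurd h (key h1 (by omega)).ne'

lemma kl_up {n k : ℕ} (hk : 1 ≤ k) (hkn : 2 * k < n) (f : KLayer n k ≃ KLayer n k)
    (h : ∀ A B, Disjoint A.1 B.1 ↔ Disjoint (f A).1 (f B).1) (U : KLayer n (k+1)) :
    ∃ W : KLayer n (k+1), ∀ A, A.1 ⊆ U.1 → (f A).1 ⊆ W.1 := by
  classical
  let W : Finset (Fin n) := (Finset.univ.filter fun A : KLayer n k => A.1 ⊆ U.1).biUnion
    fun A => (f A).1
  have hW : ∀ B : KLayer n k, Disjoint U.1 B.1 ↔ Disjoint W (f B).1 := by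
    intro B
    rw [Finset.disjoint_biUnion_left]
    constructor
    · intro hd A hA
      rw [← h]
      exact Finset.disjoint_of_subset_left (by simpa using hA) hd
    · intro hd
      rw [← le_compl_iff_disjoint_right]
      refine kl_subset_of_forall_sub hk U _ fun A hA => ?_
      have := hd A (by simpa using hA)
      rw [← h] at this
      exact le_compl_iff_disjoint_right.2 this
  have hcount : (Finset.powersetCard k U.1ᶜ).card = (Finset.powersetCard k Wᶜ).card := by
    refine Finset.card_bij (fun B hB => (f ⟨B, (Finset.mem_powersetCard.1 hB).2⟩).1) ?_ ?_ ?_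
    · intro B hB
      have hB' := Finset.mem_powersetCard.1 hB
      refine Finset.mem_powersetCard.2 ⟨?_, (f _).2⟩
      refine le_compl_iff_disjoint_left.2 ((hW _).1 ?_)
      exact le_compl_iff_disjoint_left.1 hB'.1
    · intro B hB C hC e
      have := f.injective (Subtype.ext e)
      exact congrArg Subtype.val this
    · intro C hC
      have hC' := Finset.mem_powersetCard.1 hC
      refine ⟨(f.symm ⟨C, hC'.2⟩).1, Finset.mem_powersetCard.2 ⟨?_, (f.symm _).2⟩, by simp⟩
      refine le_compl_iff_disjoint_left.2 ((hW _).2 ?_)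
      rw [f.apply_symm_apply]
      exact le_compl_iff_disjoint_left.1 hC'.1
  rw [Finset.card_powersetCard, Finset.card_powersetCard, Finset.card_compl, Finset.card_compl,
    U.2, Fintype.card_fin] at hcount
  have := kl_choose_inj hk (by omega) hcount.symm
  have hWle : W.card ≤ n := by simpa using Finset.card_le_univ W
  refine ⟨⟨W, by omega⟩, fun A hA => ?_⟩
  exact Finset.subset_biUnion_of_mem (fun A : KLayer n k => (f A).1) (by simpa using hA)

lemma kl_kneser_perm {n k : ℕ} (hk : 1 ≤ k) (hkn : 2 * k < n) (f : KLayer n k ≃ KLayer n k)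
    (h : ∀ A B, Disjoint A.1 B.1 ↔ Disjoint (f A).1 (f B).1) :
    ∃ σ : Equiv.Perm (Fin n), ∀ A, (f A).1 = A.1.map σ.toEmbedding := by
  choose p hp using kl_up hk hkn f h
  have h' : ∀ A B, Disjoint A.1 B.1 ↔ Disjoint (f.symm A).1 (f.symm B).1 := by
    intro A B
    rw [h (f.symm A), f.apply_symm_apply, f.apply_symm_apply]
  choose q hq using kl_up hk hkn f.symm h'
  have hqp : ∀ U, q (p U) = U := by
    intro U
    refine (Subtype.ext (Finset.eq_of_subset_of_card_le (kl_subset_of_forall_sub hk U _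
      fun A hA => ?_) (by rw [U.2, (q (p U)).2]))).symm
    simpa using hq _ _ (hp U A hA)
  have hpq : ∀ U, p (q U) = U := by
    intro U
    refine (Subtype.ext (Finset.eq_of_subset_of_card_le (kl_subset_of_forall_sub hk U _
      fun A hA => ?_) (by rw [U.2, (p (q U)).2]))).symm
    simpa using hp _ _ (hq U A hA)
  obtain ⟨k, rfl⟩ : ∃ z, k = z + 1 := ⟨k - 1, by omega⟩
  refine kl_perm k (by omega) f ⟨p, q, hqp, hpq⟩ fun A U => ⟨hp U A, fun hs => ?_⟩
  have := hq _ _ hs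
  simpa [hqp] using this

lemma kl_fixed {n : ℕ} (hodd : Odd n) (σ : Equiv.Perm (Fin n)) (hσ : ∀ x, σ (σ x) = x) :
    ∀ k, k ≤ n → ∃ A : Finset (Fin n), A.card = k ∧ ∀ x ∈ A, σ x ∈ A
  | 0, _ => ⟨∅, by simp⟩
  | 1, _ => by
    obtain ⟨x, hx⟩ := Equiv.Perm.exists_fixed_point_of_prime (p := 2) (n := 1) (σ := σ)
      (by rw [Fintype.card_fin]; exact hodd.not_two_dvd_nat)
      (by ext x; simp [pow_two, hσ])
    exact ⟨{x}, by simp [hx]⟩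
  | k+2, hk => by
    obtain ⟨A, hA, hinv⟩ := kl_fixed hodd σ hσ k (by omega)
    have hinv' : ∀ x, x ∉ A → σ x ∉ A := fun x hx h => hx (by simpa [hσ] using hinv _ h)
    have hc : 1 < (Aᶜ).card := by
      rw [Finset.card_compl, hA, Fintype.card_fin]; omega
    by_cases hfix : ∀ x, x ∉ A → σ x = x
    · obtain ⟨a, ha, b, hb, hab⟩ := Finset.one_lt_card.1 hc
      rw [Finset.mem_compl] at ha hb
      refine ⟨insert a (insert b A), ?_, ?_⟩
      · rw [Finset.card_insert_of_notMem (by simp [ha, hab]), Finset.card_insert_of_notMem hb, hA]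
      · intro x hx
        by_cases hxA : x ∈ A
        · simp [hinv x hxA]
        · rw [hfix x hxA]; exact hx
    · push Not at hfix
      obtain ⟨a, ha, hab⟩ := hfix
      refine ⟨insert a (insert (σ a) A), ?_, ?_⟩
      · rw [Finset.card_insert_of_notMem (by simp [ha, hab.symm]),
          Finset.card_insert_of_notMem (hinv' a ha), hA]
      · intro x hx
        simp only [Finset.mem_insert] at hx ⊢
        rcases hx with rfl | rfl | hx
        · simp
        · simp [hσ]
        · simp [hinv x hx]

lemma kneser_adj {n k : ℕ} (hk : 1 ≤ k) (A B : KLayer n k) :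
    (kneserGraph n k).Adj A B ↔ Disjoint A.1 B.1 := by
  rw [kneserGraph, SimpleGraph.fromRel_adj]
  constructor
  · rintro ⟨-, h | h⟩
    · exact h
    · exact h.symm
  · intro h
    refine ⟨?_, Or.inl h⟩
    rintro rfl
    rw [disjoint_self] at h
    have := A.2
    rw [h] at this
    simp at this
    omega

theorem kneser_not_cayley_of_odd (n k : ℕ) (hn : 4 < n) (hodd : Odd n)
    (hk : 2 ≤ k) (hkn : 2 * k < n) (heven : Even (n.choose k)) :
    ¬ IsCayleyGraph (kneserGraph n k) := by
  rintro ⟨H, hH⟩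
  obtain ⟨v0, -, hv0⟩ := Finset.exists_subset_card_eq
    (s := (Finset.univ : Finset (Fin n))) (n := k) (by simp; omega)
  have hcard : Nat.card H = n.choose k := by
    have hb : Function.Bijective
        (fun g : H => (g : kneserGraph n k ≃g kneserGraph n k) ⟨v0, hv0⟩) := by
      constructor
      · intro a b hab
        exact (hH ⟨v0, hv0⟩ _).unique hab rfl
      · intro w
        exact (hH ⟨v0, hv0⟩ w).exists
    rw [Nat.card_congr (Equiv.ofBijective _ hb), Nat.card_eq_fintype_card,
      Fintype.card_finset_len, Fintype.card_fin]
  have hpos : 0 < Nat.card H := by rw [hcard]; exact Nat.choose_pos (by omega)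
  haveI : Finite H := Nat.finite_of_card_ne_zero hpos.ne'
  obtain ⟨h, hord⟩ := exists_prime_orderOf_dvd_card' (G := H) 2 (by rw [hcard]; exact heven.two_dvd)
  have hne : h ≠ 1 := by
    rintro rfl
    simp at hord
  have hsq : h * h = 1 := by rw [← pow_two, ← hord]; exact pow_orderOf_eq_one h
  let φ : kneserGraph n k ≃g kneserGraph n k := h
  have hφ : ∀ A, φ (φ A) = A := by
    intro A
    have : φ * φ = 1 := congrArg Subtype.val hsq
    exact congrArg (fun e : kneserGraph n k ≃g kneserGraph n k => e A) this
  obtain ⟨σ, hσ⟩ := kl_kneser_perm (by omega) hkn φ.toEquiv (by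
    intro A B
    rw [← kneser_adj (by omega), ← kneser_adj (by omega)]
    exact φ.map_rel_iff.symm)
  have hσ' : ∀ A, (φ A).1 = A.1.map σ.toEmbedding := hσ
  have hinv : ∀ x, σ (σ x) = x := by
    intro x
    by_contra hx
    obtain ⟨A, hxA, hAU, hA⟩ := Finset.exists_subsuperset_card_eq (s := {x})
      (t := Finset.univ.erase (σ (σ x))) (n := k)
      (by simpa using Ne.symm hx) (by simp; omega) (by simp; omega)
    have hmem : σ (σ x) ∈ (φ (φ ⟨A, hA⟩)).1 := by
      rw [hσ', hσ']
      simpa using hxA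
    rw [hφ] at hmem
    simpa using hAU hmem
  obtain ⟨A, hA, hAinv⟩ := kl_fixed hodd σ hinv k (by omega)
  have hfix : φ ⟨A, hA⟩ = ⟨A, hA⟩ := by
    apply Subtype.ext
    rw [hσ']
    apply Finset.eq_of_subset_of_card_le
    · intro y hy
      obtain ⟨x, hx, rfl⟩ := Finset.mem_map.1 hy
      exact hAinv x hx
    · simp
  exact hne ((hH ⟨A, hA⟩ ⟨A, hA⟩).unique hfix rfl)
end

section
/- Let n > 4 and 2 ≤ k < n/2 with both n and k even, and suppose the binomial coefficient C(n,k) is even. Then the Kneser graph K(n,k) is not a Cayley graph; that is, no subgroup of the automorphism group of K(n,k) acts regularly (i.e., freely and transitively) on the vertex set of K(n,k). -/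
/-- In the Johnson graph, a triangle is either a star or a co-star. -/
theorem kn_star {α : Type*} [DecidableEq α] {k : ℕ} {A B C : Finset α}
    (hA : A.card = k + 1) (hB : B.card = k + 1) (hC : C.card = k + 1)
    (hAB : (A ∪ B).card = k + 2) (hAC : (A ∪ C).card = k + 2) (hBC : (B ∪ C).card = k + 2) :
    A ∩ B ⊆ C ↔ ¬ C ⊆ A ∪ B := by
  have iAB := Finset.card_union_add_card_inter A B
  have iAC := Finset.card_union_add_card_inter A C
  have iBC := Finset.card_union_add_card_inter B C
  constructor
  · intro h hsub
    have h1 : A ∩ B = A ∩ C := by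
      apply Finset.eq_of_subset_of_card_le
      · intro x hx
        exact Finset.mem_inter.2 ⟨(Finset.mem_inter.1 hx).1, h hx⟩
      · omega
    have h2 : A ∩ B = B ∩ C := by
      apply Finset.eq_of_subset_of_card_le
      · intro x hx
        exact Finset.mem_inter.2 ⟨(Finset.mem_inter.1 hx).2, h hx⟩
      · omega
    have h3 : C ⊆ A ∩ B := by
      intro x hx
      rcases Finset.mem_union.1 (hsub hx) with h' | h'
      · rw [h1]; exact Finset.mem_inter.2 ⟨h', hx⟩
      · rw [h2]; exact Finset.mem_inter.2 ⟨h', hx⟩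
    have := Finset.card_le_card h3
    omega
  · intro h
    obtain ⟨x, hxC, hx⟩ := Finset.not_subset.1 h
    have hxA : x ∉ A := fun h => hx (Finset.mem_union_left _ h)
    have hxB : x ∉ B := fun h => hx (Finset.mem_union_right _ h)
    have ce := Finset.card_erase_of_mem hxC
    have h1 : A ∩ C = C.erase x := by
      apply Finset.eq_of_subset_of_card_le
      · intro y hy
        have := Finset.mem_inter.1 hy
        exact Finset.mem_erase.2 ⟨fun e => hxA (e ▸ this.1), this.2⟩
      · omega
    have h2 : B ∩ C = C.erase x := by
      apply Finset.eq_of_subset_of_card_le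
      · intro y hy
        have := Finset.mem_inter.1 hy
        exact Finset.mem_erase.2 ⟨fun e => hxB (e ▸ this.1), this.2⟩
      · omega
    have h3 : C.erase x = A ∩ B := by
      apply Finset.eq_of_subset_of_card_le
      · intro y hy
        have a1 := hy
        have a2 := hy
        rw [← h1] at a1
        rw [← h2] at a2
        exact Finset.mem_inter.2 ⟨(Finset.mem_inter.1 a1).1, (Finset.mem_inter.1 a2).1⟩
      · omega
    rw [← h3]
    exact Finset.erase_subset _ _

/-- Two distinct `k`-sets inside a `k+1`-set have union that set. -/
theorem kn_union {α : Type*} [DecidableEq α] {k : ℕ} {A B C : Finset α}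
    (hA : A.card = k) (hB : B.card = k) (hC : C.card = k + 1)
    (hAC : A ⊆ C) (hBC : B ⊆ C) (hne : A ≠ B) : A ∪ B = C := by
  apply Finset.eq_of_subset_of_card_le (Finset.union_subset hAC hBC)
  by_contra hlt
  have h1 : A = A ∪ B := Finset.eq_of_subset_of_card_le Finset.subset_union_left (by omega)
  have h2 : B = A ∪ B := Finset.eq_of_subset_of_card_le Finset.subset_union_right (by omega)
  exact hne (h1.trans h2.symm)

/-- Two distinct `k+1`-sets containing a common `k`-set. -/
theorem kn_inter {α : Type*} [DecidableEq α] {k : ℕ} {A B S : Finset α}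
    (hA : A.card = k + 1) (hB : B.card = k + 1) (hS : S.card = k)
    (hSA : S ⊆ A) (hSB : S ⊆ B) (hne : A ≠ B) : A ∩ B = S ∧ (A ∪ B).card = k + 2 := by
  have i := Finset.card_union_add_card_inter A B
  have h : S = A ∩ B := by
    apply Finset.eq_of_subset_of_card_le (Finset.subset_inter hSA hSB)
    by_contra hlt
    have h1 : A ∩ B = A := Finset.eq_of_subset_of_card_le Finset.inter_subset_left (by omega)
    have h2 : A ∩ B = B := Finset.eq_of_subset_of_card_le Finset.inter_subset_right (by omega)
    exact hne (h1.symm.trans h2)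
  refine ⟨h.symm, ?_⟩
  rw [← h] at i
  omega

theorem kn_pair {n k : ℕ} (hn : k + 2 ≤ n) (S : Finset (Fin n)) (hS : S.card = k) :
    ∃ A B : Finset (Fin n), A.card = k + 1 ∧ B.card = k + 1 ∧ S ⊆ A ∧ S ⊆ B ∧ A ≠ B := by
  have hc : 1 < (Sᶜ).card := by
    rw [Finset.card_compl, Fintype.card_fin]; omega
  obtain ⟨a, ha, b, hb, hab⟩ := Finset.one_lt_card.1 hc
  rw [Finset.mem_compl] at ha hb
  refine ⟨insert a S, insert b S, ?_, ?_, Finset.subset_insert _ _, Finset.subset_insert _ _, ?_⟩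
  · rw [Finset.card_insert_of_notMem ha, hS]
  · rw [Finset.card_insert_of_notMem hb, hS]
  · intro h
    have : a ∈ insert b S := h ▸ Finset.mem_insert_self a S
    rcases Finset.mem_insert.1 this with h | h
    · exact hab h
    · exact ha h

/-- Rigidity of the Johnson scheme together with the type of triangles. -/
theorem kn_rigid {n : ℕ} : ∀ k : ℕ, 1 ≤ k → k + 1 ≤ n → ∀ f : Finset (Fin n) → Finset (Fin n),
    (∀ A, A.card = k → (f A).card = k) →
    (∀ A B, A.card = k → B.card = k → f A = f B → A = B) →
    (∀ A B C, A.card = k → B.card = k → C.card = k →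
      (((A ∪ B).card = k + 1 ∧ C ⊆ A ∪ B) ↔ ((f A ∪ f B).card = k + 1 ∧ f C ⊆ f A ∪ f B))) →
    ∃ σ : Equiv.Perm (Fin n), ∀ A, A.card = k → f A = A.image σ := by
  intro k hk
  induction k, hk using Nat.le_induction with
  | base =>
    intro _ f hf hinj _
    have h1 : ∀ x : Fin n, ∃ y, f {x} = {y} := fun x =>
      Finset.card_eq_one.1 (hf {x} (Finset.card_singleton x))
    choose s hs using h1
    have hsi : Function.Injective s := by
      intro x y hxy
      have := hinj {x} {y} (Finset.card_singleton x) (Finset.card_singleton y)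
        (by rw [hs, hs, hxy])
      exact Finset.singleton_injective this
    refine ⟨Equiv.ofBijective s (Finite.injective_iff_bijective.1 hsi), ?_⟩
    intro A hA
    obtain ⟨x, rfl⟩ := Finset.card_eq_one.1 hA
    rw [hs]
    simp
  | succ k hk ih =>
    intro hn f hf hinj hP
    -- surjectivity of f
    have hsurj : ∀ D : Finset (Fin n), D.card = k + 1 → ∃ C, C.card = k + 1 ∧ f C = D := by
      intro D hD
      have := Finset.surjOn_of_injOn_of_card_le (s := Finset.powersetCard (k+1) Finset.univ)
        (t := Finset.powersetCard (k+1) (Finset.univ : Finset (Fin n))) f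
        (by
          intro A hA
          simp only [Finset.mem_coe, Finset.mem_powersetCard_univ] at hA ⊢
          exact hf A hA)
        (by
          intro A hA B hB h
          simp only [Finset.mem_coe, Finset.mem_powersetCard_univ] at hA hB
          exact hinj A B hA hB h) le_rfl
      obtain ⟨C, hC, h⟩ := this (a := D) (by simpa using hD)
      exact ⟨C, by simpa using hC, h⟩
    have hadj : ∀ A B, A.card = k + 1 → B.card = k + 1 →
        ((A ∪ B).card = k + 2 ↔ (f A ∪ f B).card = k + 2) := by
      intro A B hA hB
      have := hP A B A hA hB hA
      simpa [Finset.subset_union_left] using this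
    have hex : ∀ S : Finset (Fin n), ∃ T : Finset (Fin n), S.card = k → T.card = k ∧
        ∀ C, C.card = k + 1 → (S ⊆ C ↔ T ⊆ f C) := by
      intro S
      by_cases hS : S.card = k
      swap
      · exact ⟨∅, fun h => absurd h hS⟩
      obtain ⟨A, B, hA, hB, hSA, hSB, hne⟩ := kn_pair (by omega) S hS
      obtain ⟨hAB, hABc⟩ := kn_inter hA hB hS hSA hSB hne
      have hfAB := (hadj A B hA hB).1 hABc
      have hfA := hf A hA
      have hfB := hf B hB
      have i := Finset.card_union_add_card_inter (f A) (f B)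
      have hT : (f A ∩ f B).card = k := by omega
      refine ⟨f A ∩ f B, fun _ => ⟨hT, ?_⟩⟩
      intro C hC
      have hfC := hf C hC
      by_cases hCA : C = A
      · subst hCA
        exact ⟨fun _ => Finset.inter_subset_left, fun _ => hSA⟩
      by_cases hCB : C = B
      · subst hCB
        exact ⟨fun _ => Finset.inter_subset_right, fun _ => hSB⟩
      have hPC := hP A B C hA hB hC
      have hCC : C ⊆ A ∪ B ↔ f C ⊆ f A ∪ f B := by
        constructor
        · intro h; exact (hPC.1 ⟨hABc, h⟩).2
        · intro h; exact (hPC.2 ⟨hfAB, h⟩).2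
      constructor
      · intro h
        have a1 := (kn_inter hA hC hS hSA h (Ne.symm hCA)).2
        have a2 := (kn_inter hB hC hS hSB h (Ne.symm hCB)).2
        rw [kn_star hfA hfB hfC hfAB ((hadj _ _ hA hC).1 a1) ((hadj _ _ hB hC).1 a2), ← hCC,
          ← kn_star hA hB hC hABc a1 a2, hAB]
        exact h
      · intro h
        have a1 := (kn_inter hfA hfC hT Finset.inter_subset_left h
          (fun e => hCA (hinj _ _ hA hC e).symm)).2
        have a2 := (kn_inter hfB hfC hT Finset.inter_subset_right h
          (fun e => hCB (hinj _ _ hB hC e).symm)).2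
        rw [← hAB, kn_star hA hB hC hABc ((hadj _ _ hA hC).2 a1) ((hadj _ _ hB hC).2 a2), hCC,
          ← kn_star hfA hfB hfC hfAB a1 a2]
        exact h
    choose g hg using hex
    have hgc : ∀ S, S.card = k → (g S).card = k := fun S hS => (hg S hS).1
    have hgi : ∀ S C, S.card = k → C.card = k + 1 → (S ⊆ C ↔ g S ⊆ f C) :=
      fun S C hS hC => (hg S hS).2 C hC
    have hginj : ∀ A B, A.card = k → B.card = k → g A = g B → A = B := by
      intro S S' hS hS' h
      obtain ⟨A, B, hA, hB, hSA, hSB, hne⟩ := kn_pair (by omega) S hS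
      obtain ⟨hAB, hABc⟩ := kn_inter hA hB hS hSA hSB hne
      rw [hgi S A hS hA, h, ← hgi S' A hS' hA] at hSA
      rw [hgi S B hS hB, h, ← hgi S' B hS' hB] at hSB
      have : S' ⊆ S := hAB ▸ Finset.subset_inter hSA hSB
      exact (Finset.eq_of_subset_of_card_le this (by omega)).symm
    obtain ⟨σ, hσ⟩ := ih (by omega) g hgc hginj (by
      intro S1 S2 S3 h1 h2 h3
      constructor
      · rintro ⟨hc, hs⟩
        have hne : g S1 ≠ g S2 := by
          intro e
          have := hginj _ _ h1 h2 e
          subst this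
          rw [Finset.union_self] at hc
          omega
        have e := kn_union (hgc _ h1) (hgc _ h2) (hf _ hc)
          ((hgi _ _ h1 hc).1 Finset.subset_union_left)
          ((hgi _ _ h2 hc).1 Finset.subset_union_right) hne
        rw [e]
        exact ⟨hf _ hc, (hgi _ _ h3 hc).1 hs⟩
      · rintro ⟨hc, hs⟩
        obtain ⟨C, hC, hCe⟩ := hsurj _ hc
        have hne : S1 ≠ S2 := by
          rintro rfl
          have := hgc _ h1
          rw [Finset.union_self] at hc
          omega
        have e := kn_union h1 h2 hC
          ((hgi _ _ h1 hC).2 (hCe ▸ Finset.subset_union_left))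
          ((hgi _ _ h2 hC).2 (hCe ▸ Finset.subset_union_right)) hne
        rw [e]
        exact ⟨hC, (hgi _ _ h3 hC).2 (hCe ▸ hs)⟩)
    refine ⟨σ, fun A hA => ?_⟩
    symm
    apply Finset.eq_of_subset_of_card_le
    · intro y hy
      obtain ⟨x, hx, rfl⟩ := Finset.mem_image.1 hy
      obtain ⟨z, hz, hzx⟩ := Finset.exists_mem_ne (s := A) (by omega) x
      have hc : (A.erase z).card = k := by rw [Finset.card_erase_of_mem hz]; omega
      have := (hgi _ _ hc hA).1 (Finset.erase_subset _ _)
      rw [hσ _ hc] at this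
      exact this (Finset.mem_image_of_mem _ (Finset.mem_erase.2 ⟨hzx.symm, hx⟩))
    · rw [hf A hA, Finset.card_image_of_injective _ σ.injective, hA]

theorem kn_adj {n k : ℕ} (hk : 1 ≤ k) (v w : {s : Finset (Fin n) // s.card = k}) :
    (kneserGraph n k).Adj v w ↔ Disjoint v.val w.val := by
  unfold kneserGraph
  rw [SimpleGraph.fromRel_adj]
  constructor
  · rintro ⟨_, h | h⟩
    · exact h
    · exact h.symm
  · intro h
    refine ⟨?_, Or.inl h⟩
    rintro rfl
    have := v.2
    rw [disjoint_self, Finset.bot_eq_empty] at h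
    rw [h, Finset.card_empty] at this
    omega

theorem kn_choose_lt {k a b : ℕ} (hk : 1 ≤ k) (hab : a < b) (hb : k ≤ b) :
    a.choose k < b.choose k := by
  obtain ⟨j, rfl⟩ : ∃ j, k = j + 1 := ⟨k - 1, by omega⟩
  obtain ⟨c, rfl⟩ : ∃ c, b = c + 1 := ⟨b - 1, by omega⟩
  have h1 : a.choose (j+1) ≤ c.choose (j+1) := Nat.choose_le_choose _ (by omega)
  have h2 : 0 < c.choose j := Nat.choose_pos (by omega)
  rw [Nat.choose_succ_succ' c j]
  omega

theorem kn_choose_inj {k a b : ℕ} (hk : 1 ≤ k) (hb : k ≤ b) (h : a.choose k = b.choose k) :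
    a = b := by
  rcases lt_trichotomy a b with h' | h' | h'
  · have := kn_choose_lt hk h' hb; omega
  · exact h'
  · have := kn_choose_lt hk h' (by omega); omega

theorem kn_common {n k : ℕ} (A B : Finset (Fin n)) :
    Nat.card {D : {s : Finset (Fin n) // s.card = k} // Disjoint A D.val ∧ Disjoint B D.val}
      = (n - (A ∪ B).card).choose k := by
  have e : (n - (A ∪ B).card).choose k = (Finset.powersetCard k (A ∪ B)ᶜ).card := by
    rw [Finset.card_powersetCard, Finset.card_compl, Fintype.card_fin]
  rw [e, ← Nat.card_eq_finsetCard]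
  refine Nat.card_congr ⟨fun D => ⟨D.1.1, ?_⟩, fun D => ⟨⟨D.1, ?_⟩, ?_⟩, fun _ => rfl, fun _ => rfl⟩
  · have h1 := D.2.1
    have h2 := D.2.2
    rw [Finset.mem_powersetCard]
    refine ⟨?_, D.1.2⟩
    rw [Finset.subset_compl_iff_disjoint_left, Finset.disjoint_union_left]
    exact ⟨h1, h2⟩
  · have := D.2
    rw [Finset.mem_powersetCard] at this
    exact this.2
  · have := D.2
    rw [Finset.mem_powersetCard] at this
    rw [Finset.subset_compl_iff_disjoint_left, Finset.disjoint_union_left] at this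
    exact this.1

theorem kn_span {n k : ℕ} (hk : 1 ≤ k) (A B C : Finset (Fin n)) (hAB : (A ∪ B).card + k ≤ n) :
    C ⊆ A ∪ B ↔ ∀ D : {s : Finset (Fin n) // s.card = k},
      Disjoint A D.val → Disjoint B D.val → Disjoint C D.val := by
  constructor
  · intro h D h1 h2
    exact Disjoint.mono_left h (Finset.disjoint_union_left.2 ⟨h1, h2⟩)
  · intro h x hx
    by_contra hxn
    obtain ⟨D, hxD, hD, hDc⟩ := Finset.exists_subsuperset_card_eq (n := k)
      (s := {x}) (t := (A ∪ B)ᶜ) (by simpa using hxn) (by simpa using hk)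
      (by rw [Finset.card_compl, Fintype.card_fin]; omega)
    rw [Finset.subset_compl_iff_disjoint_left, Finset.disjoint_union_left] at hD
    have := h ⟨D, hDc⟩ hD.1 hD.2
    exact Finset.disjoint_left.1 this hx (hxD (Finset.mem_singleton_self x))

/-- Automorphisms of the Kneser graph are induced by permutations. -/
theorem kn_aut {n k : ℕ} (hk : 1 ≤ k) (hkn : 2 * k < n) (φ : kneserGraph n k ≃g kneserGraph n k) :
    ∃ σ : Equiv.Perm (Fin n), ∀ A, (φ A).val = A.val.image σ := by
  have hd : ∀ A B, Disjoint (φ A).val (φ B).val ↔ Disjoint A.val B.val := by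
    intro A B
    rw [← kn_adj hk, ← kn_adj hk]
    exact φ.map_adj_iff
  have hcard : ∀ A B : {s : Finset (Fin n) // s.card = k},
      (A.val ∪ B.val).card = k + 1 ↔ ((φ A).val ∪ (φ B).val).card = k + 1 := by
    intro A B
    have key : ∀ A B : {s : Finset (Fin n) // s.card = k}, (A.val ∪ B.val).card = k + 1 ↔
        (n - (A.val ∪ B.val).card).choose k = (n - (k+1)).choose k := by
      intro A B
      constructor
      · intro h; rw [h]
      · intro h
        have := kn_choose_inj hk (by omega) h
        omega
    rw [key, key, ← kn_common, ← kn_common]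
    have : Nat.card {D : {s : Finset (Fin n) // s.card = k} //
          Disjoint A.val D.val ∧ Disjoint B.val D.val} =
        Nat.card {D : {s : Finset (Fin n) // s.card = k} //
          Disjoint (φ A).val D.val ∧ Disjoint (φ B).val D.val} := by
      refine Nat.card_congr (Equiv.subtypeEquiv φ.toEquiv ?_)
      intro D
      change _ ↔ Disjoint (φ A).val (φ D).val ∧ Disjoint (φ B).val (φ D).val
      rw [hd, hd]
    rw [this]
  have hspan : ∀ A B C : {s : Finset (Fin n) // s.card = k},
      ((A.val ∪ B.val).card = k + 1 ∧ C.val ⊆ A.val ∪ B.val) ↔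
      (((φ A).val ∪ (φ B).val).card = k + 1 ∧ (φ C).val ⊆ (φ A).val ∪ (φ B).val) := by
    intro A B C
    rw [← hcard]
    refine and_congr_right fun h => ?_
    have h' := (hcard A B).1 h
    rw [kn_span hk _ _ _ (by omega), kn_span hk _ _ _ (by omega)]
    constructor
    · intro H D
      obtain ⟨E, rfl⟩ := φ.surjective D
      rw [hd, hd, hd]
      exact H E
    · intro H D
      have := H (φ D)
      rw [hd, hd, hd] at this
      exact this
  let f : Finset (Fin n) → Finset (Fin n) := fun A =>
    if h : A.card = k then (φ ⟨A, h⟩).val else A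
  have hf : ∀ A (h : A.card = k), f A = (φ ⟨A, h⟩).val := fun A h => dif_pos h
  obtain ⟨σ, hσ⟩ := kn_rigid k hk (by omega) f
    (by intro A hA; rw [hf A hA]; exact (φ ⟨A, hA⟩).2)
    (by
      intro A B hA hB h
      rw [hf A hA, hf B hB] at h
      have := φ.injective (Subtype.ext h)
      exact congrArg Subtype.val this)
    (by
      intro A B C hA hB hC
      rw [hf A hA, hf B hB, hf C hC]
      exact hspan ⟨A, hA⟩ ⟨B, hB⟩ ⟨C, hC⟩)
  exact ⟨σ, fun A => by rw [← hσ A.val A.2, hf A.val A.2]⟩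

/-- An involution has invariant subsets of all even sizes. -/
theorem kn_invariant {n : ℕ} (σ : Equiv.Perm (Fin n)) (hσ : ∀ x, σ (σ x) = x) (m : ℕ) :
    2 * m ≤ n → ∃ A : Finset (Fin n), A.card = 2 * m ∧ ∀ x ∈ A, σ x ∈ A := by
  induction m with
  | zero => intro _; exact ⟨∅, by simp⟩
  | succ m ih =>
    intro hm
    obtain ⟨A, hA, hinv⟩ := ih (by omega)
    have step : ∀ a b, a ∉ A → b ∉ A → a ≠ b → (σ a = a ∨ σ a = b) → (σ b = a ∨ σ b = b) →
        ∃ A : Finset (Fin n), A.card = 2 * (m + 1) ∧ ∀ x ∈ A, σ x ∈ A := by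
      intro a b ha hb hab h1 h2
      refine ⟨insert a (insert b A), ?_, ?_⟩
      · rw [Finset.card_insert_of_notMem, Finset.card_insert_of_notMem hb]
        · omega
        · simp [hab, ha]
      · intro x hx
        simp only [Finset.mem_insert] at hx ⊢
        rcases hx with rfl | rfl | hx
        · tauto
        · tauto
        · exact Or.inr (Or.inr (hinv x hx))
    have hc : 1 < (Aᶜ).card := by
      rw [Finset.card_compl, Fintype.card_fin]; omega
    obtain ⟨a, ha, b, hb, hab⟩ := Finset.one_lt_card.1 hc
    rw [Finset.mem_compl] at ha hb
    have hout : ∀ x, x ∉ A → σ x ∉ A := fun x hx h => hx (by simpa [hσ] using hinv _ h)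
    by_cases h1 : σ a = a
    · by_cases h2 : σ b = b
      · exact step a b ha hb hab (Or.inl h1) (Or.inr h2)
      · exact step b (σ b) hb (hout b hb) (Ne.symm h2) (Or.inr rfl) (Or.inl (hσ b))
    · exact step a (σ a) ha (hout a ha) (Ne.symm h1) (Or.inr rfl) (Or.inl (hσ a))

theorem kneser_not_cayley_of_even_even (n k : ℕ) (hn : 4 < n) (hneven : Even n)
    (hkeven : Even k) (hk : 2 ≤ k) (hkn : 2 * k < n) (heven : Even (n.choose k)) :
    ¬ IsCayleyGraph (kneserGraph n k) := by
  rintro ⟨H, hH⟩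
  obtain ⟨A0, -, hA0⟩ := Finset.exists_subset_card_eq (s := (Finset.univ : Finset (Fin n))) (n := k)
    (by simp; omega)
  let v0 : {s : Finset (Fin n) // s.card = k} := ⟨A0, hA0⟩
  have hbij : Function.Bijective (fun g : H => (g : kneserGraph n k ≃g kneserGraph n k) v0) := by
    constructor
    · intro g g' h
      exact (hH v0 _).unique h rfl
    · intro w
      obtain ⟨g, hg, -⟩ := hH v0 w
      exact ⟨g, hg⟩
  have : Finite H := Finite.of_injective _ hbij.1
  have hcard : Nat.card H = n.choose k := by
    rw [Nat.card_eq_of_bijective _ hbij, Nat.card_eq_fintype_card, Fintype.card_finset_len,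
      Fintype.card_fin]
  have : Fact (Nat.Prime 2) := ⟨Nat.prime_two⟩
  obtain ⟨g, hg⟩ := exists_prime_orderOf_dvd_card' (G := H) 2 (by rw [hcard]; exact heven.two_dvd)
  have hg2 : g * g = 1 := by
    rw [← pow_two, ← hg]; exact pow_orderOf_eq_one g
  have hg1 : g ≠ 1 := by
    rintro rfl
    rw [orderOf_one] at hg
    omega
  obtain ⟨σ, hσ⟩ := kn_aut (by omega) hkn (g : kneserGraph n k ≃g kneserGraph n k)
  have hgg : ∀ v, (g : kneserGraph n k ≃g kneserGraph n k)
      ((g : kneserGraph n k ≃g kneserGraph n k) v) = v := by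
    intro v
    have h := congrArg (fun x : H => (x : kneserGraph n k ≃g kneserGraph n k) v) hg2
    exact h
  have hinv : ∀ x, σ (σ x) = x := by
    intro x
    by_contra hne
    obtain ⟨D, hxD, hD, hDc⟩ := Finset.exists_subsuperset_card_eq (n := k)
      (s := {x}) (t := ({σ (σ x)} : Finset (Fin n))ᶜ) (by simpa using hne)
      (by simp; omega)
      (by rw [Finset.card_compl, Fintype.card_fin, Finset.card_singleton]; omega)
    have h1 := congrArg Subtype.val (hgg ⟨D, hDc⟩)
    rw [hσ, hσ] at h1
    have h2 : σ (σ x) ∈ D := by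
      change Finset.image σ (Finset.image σ D) = D at h1
      have hx : x ∈ D := hxD (Finset.mem_singleton_self x)
      have h3 := Finset.mem_image_of_mem σ (Finset.mem_image_of_mem σ hx)
      rwa [h1] at h3
    have := hD h2
    simp at this
  obtain ⟨m, hm⟩ := hkeven
  obtain ⟨A, hA, hAi⟩ := kn_invariant σ hinv m (by omega)
  have hAk : A.card = k := by omega
  have hfix : (g : kneserGraph n k ≃g kneserGraph n k) ⟨A, hAk⟩ = ⟨A, hAk⟩ := by
    apply Subtype.ext
    rw [hσ]
    apply Finset.eq_of_subset_of_card_le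
    · intro y hy
      obtain ⟨x, hx, rfl⟩ := Finset.mem_image.1 hy
      exact hAi x hx
    · rw [Finset.card_image_of_injective _ σ.injective]
  exact hg1 ((hH ⟨A, hAk⟩ ⟨A, hAk⟩).unique hfix rfl)
end

section
/- Let n > 4 and 2 ≤ k < n/2 with k even (n may be odd or even). If θ is a permutation of [n] = {1,2,...,n} with θ² = id, then there exist two k-element subsets v and w of [n] such that v ∩ w = ∅, θ(v) = v, and θ(w) = w. -/
theorem exists_invariant_subset_aux {n : ℕ} (θ : Equiv.Perm (Fin n)) (h2 : ∀ x, θ (θ x) = x)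
    (S : Finset (Fin n)) (hS : ∀ x ∈ S, θ x ∈ S) (j : ℕ) (hj : 2 * j ≤ S.card) :
    ∃ T ⊆ S, T.card = 2 * j ∧ ∀ x ∈ T, θ x ∈ T := by
  induction j with
  | zero => exact ⟨∅, by simp, by simp, by simp⟩
  | succ j ih =>
    obtain ⟨T, hTS, hT, hinv⟩ := ih (by omega)
    have hc : 1 < (S \ T).card := by
      rw [Finset.card_sdiff_of_subset hTS]; omega
    have hd : ∀ x ∈ S \ T, θ x ∈ S \ T := by
      intro x hx
      rw [Finset.mem_sdiff] at hx ⊢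
      refine ⟨hS x hx.1, fun h => hx.2 ?_⟩
      have := hinv _ h
      rwa [h2] at this
    have key : ∃ P ⊆ S \ T, P.card = 2 ∧ ∀ x ∈ P, θ x ∈ P := by
      by_cases hm : ∃ x ∈ S \ T, θ x ≠ x
      · obtain ⟨x, hx, hne⟩ := hm
        refine ⟨{x, θ x}, ?_, Finset.card_pair hne.symm, ?_⟩
        · intro y hy
          rw [Finset.mem_insert, Finset.mem_singleton] at hy
          rcases hy with rfl | rfl
          · exact hx
          · exact hd _ hx
        · intro y hy
          rw [Finset.mem_insert, Finset.mem_singleton] at hy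
          rcases hy with rfl | rfl
          · simp
          · simp [h2]
      · push Not at hm
        obtain ⟨P, hP, hPc⟩ := Finset.exists_subset_card_eq (show 2 ≤ (S \ T).card from hc)
        exact ⟨P, hP, hPc, fun x hx => by rw [hm x (hP hx)]; exact hx⟩
    obtain ⟨P, hP, hPc, hPi⟩ := key
    refine ⟨T ∪ P, Finset.union_subset hTS (hP.trans Finset.sdiff_subset), ?_, ?_⟩
    · rw [Finset.card_union_of_disjoint, hT, hPc]
      · ring
      · exact Finset.disjoint_of_subset_right hP Finset.disjoint_sdiff
    · intro x hx
      rw [Finset.mem_union] at hx ⊢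
      exact hx.imp (hinv x) (hPi x)

theorem exists_two_disjoint_fixed_k_subsets (n k : ℕ) (hn : 4 < n) (hkeven : Even k)
    (hk : 2 ≤ k) (hkn : 2 * k < n) (θ : Equiv.Perm (Fin n)) (hθ : θ ^ 2 = 1) :
    ∃ v w : Finset (Fin n), v.card = k ∧ w.card = k ∧ v ∩ w = ∅ ∧
      v.image θ = v ∧ w.image θ = w := by
  have h2 : ∀ x, θ (θ x) = x := by
    intro x
    have := congrArg (fun f : Equiv.Perm (Fin n) => f x) hθ
    simpa [pow_two] using this
  have him : ∀ T : Finset (Fin n), (∀ x ∈ T, θ x ∈ T) → T.image θ = T := by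
    intro T hT
    ext y
    rw [Finset.mem_image]
    constructor
    · rintro ⟨x, hx, rfl⟩
      exact hT x hx
    · intro hy
      exact ⟨θ y, hT y hy, h2 y⟩
  obtain ⟨j, rfl⟩ := hkeven
  obtain ⟨v, -, hv, hvi⟩ := exists_invariant_subset_aux θ h2 Finset.univ (by simp) j
    (by simp; omega)
  obtain ⟨w, hw, hwc, hwi⟩ := exists_invariant_subset_aux θ h2 vᶜ (by
      intro x hx
      rw [Finset.mem_compl] at hx ⊢
      intro h
      have := hvi _ h
      rw [h2] at this
      exact hx this) j (by rw [Finset.card_compl, Fintype.card_fin]; omega)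
  refine ⟨v, w, by omega, by omega, ?_, him v hvi, him w hwi⟩
  rw [← Finset.disjoint_iff_inter_eq_empty]
  exact Finset.disjoint_of_subset_right hw disjoint_compl_right
end

section
/- Let k ≥ 2 be an integer such that the binomial coefficient C(2k+1, k) is even. Then the odd graph O_{k+1} = K(2k+1, k) is not a Cayley graph; that is, no subgroup of the automorphism group of O_{k+1} acts regularly (freely and transitively) on its vertex set. -/
/-- `A` and `B` partition everything except the point `x`. -/
def OddEdge {n : ℕ} (A B : Finset (Fin n)) (x : Fin n) : Prop :=
  x ∉ A ∧ ∀ q, q ∈ B ↔ (q ∉ A ∧ q ≠ x)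

theorem OddEdge.symm {n : ℕ} {A B : Finset (Fin n)} {x : Fin n} (h : OddEdge A B x) :
    OddEdge B A x := by
  refine ⟨fun hx => ((h.2 x).1 hx).2 rfl, fun q => ?_⟩
  have h1 := h.1
  have h2 := h.2 q
  by_cases hq : q = x
  · subst hq; tauto
  · tauto

theorem OddEdge.color_unique {n : ℕ} {A B : Finset (Fin n)} {x y : Fin n}
    (h : OddEdge A B x) (h' : OddEdge A B y) : x = y := by
  by_contra hne
  have h1 := (h'.2 x).2 ⟨h.1, hne⟩
  exact ((h.2 x).1 h1).2 rfl

theorem OddEdge.target_unique {n : ℕ} {A B C : Finset (Fin n)} {x : Fin n}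
    (h : OddEdge A B x) (h' : OddEdge A C x) : B = C := by
  ext q
  rw [h.2, h'.2]

/-- Opposite edges of a hexagon have the same color. -/
theorem hexagon {n : ℕ} {U0 U1 U2 U3 U4 U5 : Finset (Fin n)} {p1 p2 p3 p4 p5 p6 : Fin n}
    (h1 : OddEdge U0 U1 p1) (h2 : OddEdge U1 U2 p2) (h3 : OddEdge U2 U3 p3)
    (h4 : OddEdge U3 U4 p4) (h5 : OddEdge U4 U5 p5) (h6 : OddEdge U5 U0 p6)
    (h12 : p1 ≠ p2) (h61 : p1 ≠ p6) : p1 = p4 := by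
  by_contra hne
  have a2 : p1 ∈ U2 := (h2.2 p1).2 ⟨h1.symm.1, h12⟩
  have a3 : p1 ∉ U3 := fun h => ((h3.2 p1).1 h).1 a2
  have a4 : p1 ∈ U4 := (h4.2 p1).2 ⟨a3, hne⟩
  have a5 : p1 ∉ U5 := fun h => ((h5.2 p1).1 h).1 a4
  exact h1.1 ((h6.2 p1).2 ⟨a5, h61⟩)

theorem kneser_adj_iff (k : ℕ) (hk : 2 ≤ k)
    (A B : {s : Finset (Fin (2 * k + 1)) // s.card = k}) :
    (kneserGraph (2 * k + 1) k).Adj A B ↔ ∃ x, OddEdge A.1 B.1 x := by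
  unfold kneserGraph
  rw [SimpleGraph.fromRel_adj]
  constructor
  · rintro ⟨_, h⟩
    have hd : Disjoint A.1 B.1 := h.elim id (fun h => h.symm)
    have hc : ((A.1 ∪ B.1)ᶜ).card = 1 := by
      rw [Finset.card_compl, Finset.card_union_of_disjoint hd, A.2, B.2, Fintype.card_fin]
      omega
    obtain ⟨x, hx⟩ := Finset.card_eq_one.1 hc
    have key : ∀ q, (q ∉ A.1 ∧ q ∉ B.1) ↔ q = x := by
      intro q
      have : q ∈ (A.1 ∪ B.1)ᶜ ↔ q ∈ ({x} : Finset _) := by rw [hx]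
      simpa using this
    refine ⟨x, ((key x).2 rfl).1, fun q => ?_⟩
    have h1 := key q
    have h2 : q ∈ A.1 → q ∉ B.1 := fun h => Finset.disjoint_left.1 hd h
    tauto
  · rintro ⟨x, hx⟩
    have hd : Disjoint A.1 B.1 :=
      Finset.disjoint_left.2 fun q hA hB => ((hx.2 q).1 hB).1 hA
    refine ⟨?_, Or.inl hd⟩
    rintro rfl
    rw [disjoint_self, Finset.bot_eq_empty] at hd
    have := A.2
    rw [hd] at this
    simp at this
    omega

theorem color_step (k : ℕ) (hk : 2 ≤ k)
    (g : kneserGraph (2 * k + 1) k ≃g kneserGraph (2 * k + 1) k)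
    (A B A' B' : {s : Finset (Fin (2 * k + 1)) // s.card = k}) (x a b y : Fin (2 * k + 1))
    (h : OddEdge A.1 B.1 x) (ha : a ∈ A.1) (hb : b ∈ B.1)
    (hA' : A'.1 = insert b (A.1.erase a)) (hB' : B'.1 = insert a (B.1.erase b))
    (hy : OddEdge (g A').1 (g B').1 y) : OddEdge (g A).1 (g B).1 y := by
  have hxA := h.1
  have hxB := h.symm.1
  have haB : a ∉ B.1 := fun hh => ((h.2 a).1 hh).1 ha
  have hbA : b ∉ A.1 := ((h.2 b).1 hb).1
  have hxa : x ≠ a := fun e => hxA (e ▸ ha)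
  have hxb : x ≠ b := fun e => hxB (e ▸ hb)
  have hab : a ≠ b := fun e => haB (e ▸ hb)
  have c2 : (insert x (A.1.erase a)).card = k := by
    rw [Finset.card_insert_of_notMem (by simp [hxA]), Finset.card_erase_of_mem ha, A.2]; omega
  have c5 : (insert x (B.1.erase b)).card = k := by
    rw [Finset.card_insert_of_notMem (by simp [hxB]), Finset.card_erase_of_mem hb, B.2]; omega
  have hh := h.2
  have e2 : OddEdge B.1 (insert x (A.1.erase a)) a := by
    refine ⟨haB, fun q => ?_⟩
    have := hh q
    simp only [Finset.mem_insert, Finset.mem_erase]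
    grind
  have e3 : OddEdge (insert x (A.1.erase a)) B'.1 b := by
    refine ⟨by simp [hbA, hxb.symm], fun q => ?_⟩
    have := hh q
    rw [hB']
    simp only [Finset.mem_insert, Finset.mem_erase]
    grind
  have e4 : OddEdge B'.1 A'.1 x := by
    refine ⟨by rw [hB']; simp [hxB, hxa], fun q => ?_⟩
    have := hh q
    rw [hB', hA']
    simp only [Finset.mem_insert, Finset.mem_erase]
    grind
  have e5 : OddEdge A'.1 (insert x (B.1.erase b)) a := by
    refine ⟨by rw [hA']; simp [hab], fun q => ?_⟩
    have := hh q
    rw [hA']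
    simp only [Finset.mem_insert, Finset.mem_erase]
    grind
  have e6 : OddEdge (insert x (B.1.erase b)) A.1 b := by
    refine ⟨by simp [hxb.symm], fun q => ?_⟩
    have := hh q
    simp only [Finset.mem_insert, Finset.mem_erase]
    grind
  have im : ∀ (U V : {s : Finset (Fin (2 * k + 1)) // s.card = k}) z,
      OddEdge U.1 V.1 z → ∃ w, OddEdge (g U).1 (g V).1 w := fun U V z hz =>
    (kneser_adj_iff k hk _ _).1 (g.map_rel_iff.2 ((kneser_adj_iff k hk U V).2 ⟨z, hz⟩))
  obtain ⟨p1, f1⟩ := im A B x h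
  obtain ⟨p2, f2⟩ := im B ⟨_, c2⟩ a e2
  obtain ⟨p3, f3⟩ := im ⟨_, c2⟩ B' b e3
  obtain ⟨p5, f5⟩ := im A' ⟨_, c5⟩ a e5
  obtain ⟨p6, f6⟩ := im ⟨_, c5⟩ A b e6
  have h12 : p1 ≠ p2 := by
    rintro rfl
    have := g.injective (Subtype.ext (f1.symm.target_unique f2))
    have h3 := congrArg Subtype.val this
    simp only at h3
    rw [h3] at hxA
    simp at hxA
  have h61 : p1 ≠ p6 := by
    rintro rfl
    have := g.injective (Subtype.ext (f1.target_unique f6.symm))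
    have h3 := congrArg Subtype.val this
    simp only at h3
    rw [h3] at hxB
    simp at hxB
  have := hexagon f1 f2 f3 hy.symm f5 f6 h12 h61
  exact this ▸ f1

theorem exists_edge (k : ℕ) (x : Fin (2 * k + 1)) :
    ∃ A B : {s : Finset (Fin (2 * k + 1)) // s.card = k}, OddEdge A.1 B.1 x := by
  have hc : (Finset.univ.erase x).card = 2 * k := by
    rw [Finset.card_erase_of_mem (Finset.mem_univ x)]; simp
  obtain ⟨A, hA, hAc⟩ := Finset.exists_subset_card_eq (s := Finset.univ.erase x) (n := k)
    (by omega)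
  refine ⟨⟨A, hAc⟩, ⟨Finset.univ.erase x \ A, ?_⟩, ?_, ?_⟩
  · rw [Finset.card_sdiff_of_subset hA]; omega
  · intro hx
    simpa using hA hx
  · intro q
    simp
    tauto

theorem color_const (k : ℕ) (hk : 2 ≤ k)
    (g : kneserGraph (2 * k + 1) k ≃g kneserGraph (2 * k + 1) k) (x : Fin (2 * k + 1)) :
    ∃ y, ∀ A B : {s : Finset (Fin (2 * k + 1)) // s.card = k},
      OddEdge A.1 B.1 x → OddEdge (g A).1 (g B).1 y := by
  obtain ⟨A0, B0, h0⟩ := exists_edge k x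
  obtain ⟨y, hy⟩ := (kneser_adj_iff k hk _ _).1
    (g.map_rel_iff.2 ((kneser_adj_iff k hk A0 B0).2 ⟨x, h0⟩))
  refine ⟨y, ?_⟩
  suffices H : ∀ m, ∀ A B : {s : Finset (Fin (2 * k + 1)) // s.card = k},
      (A.1 \ A0.1).card = m → OddEdge A.1 B.1 x → OddEdge (g A).1 (g B).1 y from
    fun A B h => H _ A B rfl h
  intro m
  induction m with
  | zero =>
    intro A B hm h
    have hs : A.1 ⊆ A0.1 := by
      rw [Finset.card_eq_zero] at hm
      exact Finset.sdiff_eq_empty_iff_subset.1 hm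
    have hA : A = A0 := Subtype.ext (Finset.eq_of_subset_of_card_le hs (by rw [A.2, A0.2]))
    subst hA
    have hB : B = B0 := Subtype.ext (h.target_unique h0)
    subst hB
    exact hy
  | succ m ih =>
    intro A B hm h
    obtain ⟨a, ha⟩ : (A.1 \ A0.1).Nonempty := by
      rw [← Finset.card_pos]; omega
    have hc : (A0.1 \ A.1).card = (A.1 \ A0.1).card :=
      Finset.card_sdiff_comm (by rw [A.2, A0.2])
    obtain ⟨b, hb⟩ : (A0.1 \ A.1).Nonempty := by
      rw [← Finset.card_pos]; omega
    rw [Finset.mem_sdiff] at ha hb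
    have hbx : b ≠ x := fun e => h0.1 (e ▸ hb.1)
    have hbB : b ∈ B.1 := (h.2 b).2 ⟨hb.2, hbx⟩
    have haB : a ∉ B.1 := fun hh => ((h.2 a).1 hh).1 ha.1
    have cA : (insert b (A.1.erase a)).card = k := by
      rw [Finset.card_insert_of_notMem (by simp [hb.2]), Finset.card_erase_of_mem ha.1, A.2]
      omega
    have cB : (insert a (B.1.erase b)).card = k := by
      rw [Finset.card_insert_of_notMem (by simp [haB]), Finset.card_erase_of_mem hbB, B.2]
      omega
    refine color_step k hk g A B ⟨_, cA⟩ ⟨_, cB⟩ x a b y h ha.1 hbB rfl rfl (ih _ _ ?_ ?_)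
    · have : insert b (A.1.erase a) \ A0.1 = (A.1 \ A0.1).erase a := by
        ext q
        simp only [Finset.mem_sdiff, Finset.mem_insert, Finset.mem_erase]
        grind
      rw [this, Finset.card_erase_of_mem (Finset.mem_sdiff.2 ha), hm]
      rfl
    · have hxA := h.1
      have hax : a ≠ x := fun e => hxA (e ▸ ha.1)
      refine ⟨by simp [hxA, hbx.symm], fun q => ?_⟩
      have := h.2 q
      simp only [Finset.mem_insert, Finset.mem_erase]
      grind

theorem exists_invariant (k : ℕ) (s : Fin (2 * k + 1) → Fin (2 * k + 1))
    (hs : ∀ x, s (s x) = x) (j : ℕ) (hj : j ≤ k) :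
    ∃ T : Finset (Fin (2 * k + 1)), T.card = j ∧ ∀ x ∈ T, s x ∈ T := by
  induction j with
  | zero => exact ⟨∅, by simp⟩
  | succ j ih =>
    obtain ⟨T, hT, hinv⟩ := ih (by omega)
    by_cases hf : ∃ f, f ∉ T ∧ s f = f
    · obtain ⟨f, hfT, hf⟩ := hf
      refine ⟨insert f T, by rw [Finset.card_insert_of_notMem hfT, hT], ?_⟩
      intro x hx
      rw [Finset.mem_insert] at hx ⊢
      rcases hx with rfl | hx
      · exact Or.inl hf
      · exact Or.inr (hinv x hx)
    · obtain ⟨f, hf0⟩ : ∃ f, s f = f := by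
        have : Fact (Nat.Prime 2) := ⟨Nat.prime_two⟩
        exact Equiv.Perm.exists_fixed_point_of_prime (p := 2) (n := 1)
          (by rw [Fintype.card_fin]; omega) (σ := ⟨s, s, hs, hs⟩)
          (by ext x; simp [pow_two, hs])
      have hfT : f ∈ T := by
        by_contra h
        exact hf ⟨f, h, hf0⟩
      obtain ⟨a, ha⟩ : ∃ a, a ∉ T := by
        by_contra hno
        push Not at hno
        have : T = Finset.univ := Finset.eq_univ_iff_forall.2 hno
        rw [this] at hT
        simp at hT
        omega
      have hsa : s a ∉ T := fun h => ha (by simpa [hs] using hinv _ h)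
      have hne : s a ≠ a := fun h => hf ⟨a, ha, h⟩
      refine ⟨insert a (insert (s a) (T.erase f)), ?_, ?_⟩
      · rw [Finset.card_insert_of_notMem (by simp [ha, hne.symm]),
          Finset.card_insert_of_notMem (by simp [hsa]), Finset.card_erase_of_mem hfT, hT]
        have : 0 < T.card := Finset.card_pos.2 ⟨f, hfT⟩
        omega
      · intro x hx
        simp only [Finset.mem_insert, Finset.mem_erase] at hx ⊢
        rcases hx with rfl | rfl | ⟨h1, h2⟩
        · simp
        · simp [hs]
        · refine Or.inr (Or.inr ⟨fun e => h1 ?_, hinv x h2⟩)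
          rw [← hs x, e, hf0]

theorem involution_fixes (k : ℕ) (hk : 2 ≤ k)
    (g : kneserGraph (2 * k + 1) k ≃g kneserGraph (2 * k + 1) k) (hg : ∀ A, g (g A) = A) :
    ∃ A, g A = A := by
  choose s hs using color_const k hk g
  have hss : ∀ x, s (s x) = x := by
    intro x
    obtain ⟨A, B, h⟩ := exists_edge k x
    have h1 := hs _ _ _ (hs _ _ _ h)
    rw [hg, hg] at h1
    exact h1.color_unique h
  have hmem : ∀ (A : {s : Finset (Fin (2 * k + 1)) // s.card = k}) x, x ∉ A.1 →
      s x ∉ (g A).1 := by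
    intro A x hx
    have c : ((insert x A.1)ᶜ).card = k := by
      rw [Finset.card_compl, Finset.card_insert_of_notMem hx, A.2, Fintype.card_fin]; omega
    exact (hs x A ⟨_, c⟩ ⟨hx, fun q => by simp; tauto⟩).1
  obtain ⟨T, hT, hinv⟩ := exists_invariant k s hss k le_rfl
  refine ⟨⟨T, hT⟩, Subtype.ext (Finset.eq_of_subset_of_card_le ?_ ?_)⟩
  · intro x hx
    by_contra hxT
    have h1 : s x ∉ T := fun h => hxT (by simpa [hss] using hinv _ h)
    have := hmem ⟨T, hT⟩ (s x) h1
    rw [hss] at this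
    exact this hx
  · rw [(g ⟨T, hT⟩).2]
    exact hT.le

theorem odd_graph_not_cayley_of_even_order (k : ℕ) (hk : 2 ≤ k)
    (heven : Even ((2 * k + 1).choose k)) :
    ¬ IsCayleyGraph (kneserGraph (2 * k + 1) k) := by
  rintro ⟨H, hH⟩
  obtain ⟨A0, _, _⟩ := exists_edge k 0
  have hbij : Function.Bijective (fun g : H =>
      (g : kneserGraph (2 * k + 1) k ≃g kneserGraph (2 * k + 1) k) A0) := by
    constructor
    · intro g g' h
      exact (hH A0 ((g' : kneserGraph (2 * k + 1) k ≃g kneserGraph (2 * k + 1) k) A0)).unique h rfl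
    · intro w
      exact (hH A0 w).exists
  have hcard : Nat.card H = (2 * k + 1).choose k := by
    rw [Nat.card_congr (Equiv.ofBijective _ hbij), Nat.card_eq_fintype_card,
      Fintype.card_finset_len, Fintype.card_fin]
  have : Finite H := Finite.of_injective _ hbij.1
  have : Fact (Nat.Prime 2) := ⟨Nat.prime_two⟩
  obtain ⟨g, hg⟩ := exists_prime_orderOf_dvd_card' (G := H) 2 (hcard ▸ heven.two_dvd)
  have hg2 : g * g = 1 := by
    rw [← pow_two]
    exact orderOf_dvd_iff_pow_eq_one.1 (dvd_of_eq hg)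
  have hgg : ∀ A, (g : kneserGraph (2 * k + 1) k ≃g kneserGraph (2 * k + 1) k)
      ((g : kneserGraph (2 * k + 1) k ≃g kneserGraph (2 * k + 1) k) A) = A := by
    intro A
    have h2 : ((g * g : H) : kneserGraph (2 * k + 1) k ≃g kneserGraph (2 * k + 1) k) A = A := by
      rw [hg2]; rfl
    exact h2
  obtain ⟨A, hA⟩ := involution_fixes k hk g hgg
  have : g = 1 := (hH A A).unique hA rfl
  rw [this, orderOf_one] at hg
  omega
end

section
/- Let k > 4 be an even integer such that the binomial coefficient C(2k+1, k) is divisible by 4. Then the line graph L(O_{k+1}) of the odd graph O_{k+1} is not a Cayley graph; that is, no subgroup of the automorphism group of L(O_{k+1}) acts regularly (freely and transitively) on its vertex set. -/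
namespace OddLine

variable {k : ℕ}

abbrev VV (k : ℕ) := {s : Finset (Fin (2 * k + 1)) // s.card = k}
abbrev EE (k : ℕ) := (kneserGraph (2 * k + 1) k).edgeSet

lemma adj_iff (hk : 0 < k) (A B : VV k) :
    (kneserGraph (2 * k + 1) k).Adj A B ↔ Disjoint A.1 B.1 := by
  simp only [kneserGraph, SimpleGraph.fromRel_adj]
  constructor
  · rintro ⟨_, h | h⟩
    · exact h
    · exact h.symm
  · intro h
    refine ⟨?_, Or.inl h⟩
    rintro rfl
    have h2 := A.2
    rw [disjoint_self, Finset.bot_eq_empty] at h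
    rw [h] at h2
    simp at h2
    omega

def Touch (e f : EE k) : Prop := ∃ v, v ∈ e.1 ∧ v ∈ f.1

def Miss (e : EE k) (x : Fin (2 * k + 1)) : Prop := ∀ v ∈ e.1, x ∉ v.1

lemma touch_iff (e f : EE k) :
    Touch e f ↔ e = f ∨ (kneserGraph (2 * k + 1) k).lineGraph.Adj e f := by
  rw [SimpleGraph.lineGraph_adj_iff_exists]
  constructor
  · rintro ⟨v, h⟩
    by_cases hef : e = f
    · exact Or.inl hef
    · exact Or.inr ⟨hef, v, h⟩
  · rintro (rfl | ⟨_, h⟩)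
    · obtain ⟨e, he⟩ := e
      induction e with
      | h a b => exact ⟨a, by simp, by simp⟩
    · exact h

lemma touch_map (σ : (kneserGraph (2 * k + 1) k).lineGraph ≃g (kneserGraph (2 * k + 1) k).lineGraph)
    (e f : EE k) : Touch (σ e) (σ f) ↔ Touch e f := by
  rw [touch_iff, touch_iff, σ.map_adj_iff, σ.injective.eq_iff]

lemma edge_eq {e : EE k} {u v : VV k} (hu : u ∈ e.1) (hv : v ∈ e.1) (h : u ≠ v) : e.1 = s(u, v) :=
  (Sym2.mem_and_mem_iff h).1 ⟨hu, hv⟩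

lemma edge_disj (hk : 0 < k) {e : EE k} {u v : VV k} (hu : u ∈ e.1) (hv : v ∈ e.1) (h : u ≠ v) :
    Disjoint u.1 v.1 := by
  have h1 := edge_eq hu hv h
  have h2 := e.2
  rw [h1, SimpleGraph.mem_edgeSet, adj_iff hk] at h2
  exact h2

/-- Two `k`-sets missing `x` and disjoint from the `k`-set `B` missing `x` coincide. -/
lemma eq_of_disj {A B C : Finset (Fin (2 * k + 1))} (hA : A.card = k) (hB : B.card = k)
    (hC : C.card = k) (hAB : Disjoint A B) (hCB : Disjoint C B) {x : Fin (2 * k + 1)}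
    (xA : x ∉ A) (xB : x ∉ B) (xC : x ∉ C) : A = C := by
  have key : ∀ D : Finset (Fin (2 * k + 1)), D.card = k → Disjoint D B → x ∉ D →
      D = (insert x B)ᶜ := by
    intro D hD hDB xD
    apply Finset.eq_of_subset_of_card_le
    · intro y hy
      simp only [Finset.mem_compl, Finset.mem_insert, not_or]
      exact ⟨fun h => xD (h ▸ hy), fun h => Finset.disjoint_left.1 hDB hy h⟩
    · rw [Finset.card_compl, Finset.card_insert_of_notMem xB, Fintype.card_fin]
      omega
  rw [key A hA hAB xA, key C hC hCB xC]

structure Hex (e : Fin 6 → EE k) : Prop where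
  t : ∀ i, Touch (e i) (e (i + 1))
  n : ∀ i, ¬ Touch (e i) (e (i + 2))

lemma Hex.map {e : Fin 6 → EE k} (h : Hex e)
    (σ : (kneserGraph (2 * k + 1) k).lineGraph ≃g (kneserGraph (2 * k + 1) k).lineGraph) :
    Hex (fun i => σ (e i)) :=
  ⟨fun i => (touch_map σ _ _).2 (h.t i), fun i hh => h.n i ((touch_map σ _ _).1 hh)⟩

lemma Hex.miss (hk : 0 < k) {e : Fin 6 → EE k} (h : Hex e) {x} (hx : Miss (e 0) x) :
    Miss (e 3) x := by
  choose v hv hv' using h.t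
  have hne : ∀ i, v i ≠ v (i + 1) := by
    intro i hi
    refine h.n i ⟨v i, hv i, ?_⟩
    rw [hi]
    have := hv' (i + 1)
    rwa [add_assoc] at this
  have hd : ∀ i, Disjoint (v i).1 (v (i + 1)).1 := fun i =>
    edge_disj hk (hv' i) (hv (i + 1)) (hne i)
  -- edge `e (i+1)` is `v i, v (i+1)`
  have hE : ∀ i, (e (i + 1)).1 = s(v i, v (i + 1)) := fun i =>
    edge_eq (hv' i) (hv (i + 1)) (hne i)
  have x0 : x ∉ (v 0).1 := hx _ (hv 0)
  have x5 : x ∉ (v 5).1 := hx _ (hv' 5)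
  have hd0 : Disjoint (v 0).1 (v 1).1 := hd 0
  have hd1 : Disjoint (v 1).1 (v 2).1 := hd 1
  have hd3 : Disjoint (v 3).1 (v 4).1 := hd 3
  have hd4 : Disjoint (v 4).1 (v 5).1 := hd 4
  have hd5 : Disjoint (v 5).1 (v 0).1 := hd 5
  have e1 : (e 1).1 = s(v 0, v 1) := hE 0
  have e3 : (e 3).1 = s(v 2, v 3) := hE 2
  have e5 : (e 5).1 = s(v 4, v 5) := hE 4
  have x1 : x ∈ (v 1).1 := by
    by_contra hc
    have := eq_of_disj (v 5).2 (v 0).2 (v 1).2 hd5 hd0.symm x5 x0 hc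
    have h51 : v 5 = v 1 := Subtype.ext this
    refine h.n 5 ⟨v 5, hv 5, ?_⟩
    show v 5 ∈ (e 1).1
    rw [h51]; exact hv 1
  have x4 : x ∈ (v 4).1 := by
    by_contra hc
    have := eq_of_disj (v 4).2 (v 5).2 (v 0).2 hd4 hd5.symm hc x5 x0
    have h51 : v 4 = v 0 := Subtype.ext this
    refine h.n 5 ⟨v 4, hv' 4, ?_⟩
    show v 4 ∈ (e 1).1
    rw [h51]; exact hv' 0
  intro w hw
  rw [e3, Sym2.mem_iff] at hw
  rcases hw with rfl | rfl
  · exact Finset.disjoint_left.1 hd1 x1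
  · exact Finset.disjoint_right.1 hd3 x4

def mkE (hk : 0 < k) (A B : VV k) (h : Disjoint A.1 B.1) : EE k :=
  ⟨s(A, B), by rw [SimpleGraph.mem_edgeSet, adj_iff hk]; exact h⟩

lemma exists_rep (hk : 0 < k) (e : EE k) : ∃ A B, ∃ h, e = mkE hk A B h := by
  obtain ⟨e, he⟩ := e
  induction e with
  | h A B => exact ⟨A, B, (adj_iff hk A B).1 he, rfl⟩

lemma hex_of_verts (hk : 0 < k) (v : Fin 6 → VV k) (hinj : Function.Injective v)
    (hd : ∀ i, Disjoint (v i).1 (v (i + 1)).1) :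
    Hex (fun i => mkE hk (v i) (v (i + 1)) (hd i)) := by
  constructor
  · intro i
    exact ⟨v (i + 1), by simp [mkE], by simp [mkE]⟩
  · rintro i ⟨w, hw, hw'⟩
    simp only [mkE, Sym2.mem_iff] at hw hw'
    rcases hw with rfl | rfl <;> rcases hw' with h | h <;> have := hinj h <;>
      revert this <;> clear * - <;> revert i <;> decide

lemma hex_exists (hk : 2 ≤ k) (A B : VV k) (h : Disjoint A.1 B.1) {x a b} (xA : x ∉ A.1)
    (xB : x ∉ B.1) (ha : a ∈ A.1) (hb : b ∈ B.1) :
    ∃ (A' B' : VV k) (h' : Disjoint A'.1 B'.1),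
      A'.1 = insert b (A.1.erase a) ∧ B'.1 = insert a (B.1.erase b) ∧
      ∃ e : Fin 6 → EE k, Hex e ∧ e 0 = mkE (by omega) A B h ∧ e 3 = mkE (by omega) A' B' h' := by
  obtain ⟨A, hA⟩ := A
  obtain ⟨B, hB⟩ := B
  simp only at *
  have hcard : ∀ (S : Finset (Fin (2 * k + 1))) (s t), S.card = k → s ∈ S → t ∉ S →
      (insert t (S.erase s)).card = k := by
    intro S s t hS hs ht
    rw [Finset.card_insert_of_notMem (fun hh => ht (Finset.mem_of_mem_erase hh)),
      Finset.card_erase_of_mem hs]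
    omega
  have aB := Finset.disjoint_left.1 h ha
  have bA := Finset.disjoint_right.1 h hb
  obtain ⟨c, hc, hca⟩ := Finset.exists_mem_ne (by omega : 1 < A.card) a
  have cB := Finset.disjoint_left.1 h hc
  have hdis : ∀ y, y ∈ A → y ∉ B := fun y hy => Finset.disjoint_left.1 h hy
  let v : Fin 6 → VV k := ![⟨A, hA⟩, ⟨B, hB⟩, ⟨insert x (A.erase a), hcard _ _ _ hA ha xA⟩,
    ⟨insert a (B.erase b), hcard _ _ _ hB hb aB⟩, ⟨insert b (A.erase a), hcard _ _ _ hA ha bA⟩,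
    ⟨insert x (B.erase b), hcard _ _ _ hB hb xB⟩]
  have hd : ∀ i, Disjoint (v i).1 (v (i + 1)).1 := by
    intro i
    fin_cases i <;> simp only [v, Finset.disjoint_left] <;> intro y <;> simp <;> grind
  have hinj : Function.Injective v := by
    intro i j hij
    have h1 := congrArg (fun s : VV k => c ∈ s.1) hij
    have h2 := congrArg (fun s : VV k => x ∈ s.1) hij
    have h3 := congrArg (fun s : VV k => a ∈ s.1) hij
    have h4 := congrArg (fun s : VV k => b ∈ s.1) hij
    clear hij
    fin_cases i <;> fin_cases j <;> first | rfl | (exfalso; simp [v] at h1 h2 h3 h4; grind)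
  refine ⟨v 4, v 3, (hd 3).symm, rfl, rfl, _, hex_of_verts (by omega) v hinj hd, rfl, ?_⟩
  apply Subtype.ext
  exact Sym2.eq_swap

lemma miss_mk (hk : 0 < k) (A B : VV k) (h : Disjoint A.1 B.1) (x) :
    Miss (mkE hk A B h) x ↔ x ∉ A.1 ∧ x ∉ B.1 := by
  simp [Miss, mkE]

lemma same_label (hk : 2 ≤ k)
    (σ : (kneserGraph (2 * k + 1) k).lineGraph ≃g (kneserGraph (2 * k + 1) k).lineGraph)
    {x y} (m : ℕ) : ∀ (A B C D : VV k) (h : Disjoint A.1 B.1) (h' : Disjoint C.1 D.1),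
    (A.1 \ C.1).card = m → x ∉ A.1 → x ∉ B.1 → x ∉ C.1 → x ∉ D.1 →
    Miss (σ (mkE (by omega) A B h)) y → Miss (σ (mkE (by omega) C D h')) y := by
  induction m with
  | zero =>
    intro A B C D h h' hm xA xB xC xD hy
    have hAC : A = C := by
      apply Subtype.ext
      rw [Finset.card_eq_zero, Finset.sdiff_eq_empty_iff_subset] at hm
      exact Finset.eq_of_subset_of_card_le hm (by rw [A.2, C.2])
    subst hAC
    have hBD : B = D := Subtype.ext (eq_of_disj B.2 A.2 D.2 h.symm h'.symm xB xA xD)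
    subst hBD
    exact hy
  | succ m ih =>
    intro A B C D h h' hm xA xB xC xD hy
    have hcc : (C.1 \ A.1).card = (A.1 \ C.1).card :=
      Finset.card_sdiff_comm (by rw [A.2, C.2])
    obtain ⟨a, ha⟩ := Finset.card_pos.1 (by omega : 0 < (A.1 \ C.1).card)
    obtain ⟨b, hb⟩ := Finset.card_pos.1 (by omega : 0 < (C.1 \ A.1).card)
    rw [Finset.mem_sdiff] at ha hb
    have hbB : b ∈ B.1 := by
      by_contra hbB
      have h1 : insert x (insert b (A.1 ∪ B.1)) ⊆ Finset.univ := Finset.subset_univ _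
      have h2 := Finset.card_le_card h1
      rw [Finset.card_insert_of_notMem, Finset.card_insert_of_notMem,
        Finset.card_union_of_disjoint h, A.2, B.2, Finset.card_univ, Fintype.card_fin] at h2
      · omega
      · simp [hb.2, hbB]
      · simp only [Finset.mem_insert, Finset.mem_union, not_or]
        exact ⟨fun hh => xC (hh ▸ hb.1), xA, xB⟩
    obtain ⟨A', B', hd', hA', hB', e, he, he0, he3⟩ := hex_exists hk A B h xA xB ha.1 hbB
    have key := (he.map σ).miss (by omega) (x := y) (by simpa only [he0] using hy)
    simp only [he3] at key
    refine ih A' B' C D hd' h' ?_ ?_ ?_ xC xD key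
    · have : A'.1 \ C.1 = (A.1 \ C.1).erase a := by
        rw [hA']; ext z; simp; grind
      rw [this, Finset.card_erase_of_mem (by simp [ha]), hm]; rfl
    · rw [hA']; simp; exact ⟨fun hh => xC (hh ▸ hb.1), fun _ => xA⟩
    · rw [hB']; simp; exact ⟨fun hh => xA (hh ▸ ha.1), fun _ => xB⟩

lemma same_label' (hk : 2 ≤ k)
    (σ : (kneserGraph (2 * k + 1) k).lineGraph ≃g (kneserGraph (2 * k + 1) k).lineGraph)
    {x y} (e f : EE k) (he : Miss e x) (hf : Miss f x) (hy : Miss (σ e) y) : Miss (σ f) y := by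
  obtain ⟨A, B, h, rfl⟩ := exists_rep (by omega) e
  obtain ⟨C, D, h', rfl⟩ := exists_rep (by omega) f
  rw [miss_mk] at he hf
  exact same_label hk σ _ A B C D h h' rfl he.1 he.2 hf.1 hf.2 hy

lemma exists_miss (hk : 0 < k) (e : EE k) : ∃ x, Miss e x := by
  obtain ⟨A, B, h, rfl⟩ := exists_rep hk e
  by_contra! hc
  have : (A.1 ∪ B.1) = Finset.univ := by
    ext x
    have := hc x
    rw [miss_mk] at this
    simp; tauto
  have h2 := congrArg Finset.card this
  rw [Finset.card_union_of_disjoint h, A.2, B.2, Finset.card_univ, Fintype.card_fin] at h2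
  omega

lemma miss_unique (hk : 0 < k) (e : EE k) {x y} (hx : Miss e x) (hy : Miss e y) : x = y := by
  obtain ⟨A, B, h, rfl⟩ := exists_rep hk e
  rw [miss_mk] at hx hy
  by_contra hxy
  have h2 := Finset.card_le_card (Finset.subset_univ (insert x (insert y (A.1 ∪ B.1))))
  rw [Finset.card_insert_of_notMem, Finset.card_insert_of_notMem,
    Finset.card_union_of_disjoint h, A.2, B.2, Finset.card_univ, Fintype.card_fin] at h2
  · omega
  · simp [hy]
  · simp [hx, hxy]

/-- Complementary set. -/
lemma exists_compl (A : VV k) {x} (hx : x ∉ A.1) :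
    ∃ B : VV k, Disjoint A.1 B.1 ∧ B.1 = (insert x A.1)ᶜ := by
  refine ⟨⟨(insert x A.1)ᶜ, ?_⟩, ?_, rfl⟩
  · rw [Finset.card_compl, Finset.card_insert_of_notMem hx, A.2, Fintype.card_fin]; omega
  · rw [Finset.disjoint_left]; intro y hy; simp [hy]

lemma exists_with_miss (hk : 0 < k) (x : Fin (2 * k + 1)) : ∃ e : EE k, Miss e x := by
  obtain ⟨A, hA, hAc⟩ := Finset.exists_subset_card_eq
    (s := Finset.univ.erase x) (n := k) (by simp; omega)
  have hx : x ∉ A := fun h => by simpa using hA h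
  obtain ⟨B, hd, hB⟩ := exists_compl (⟨A, hAc⟩ : VV k) hx
  refine ⟨mkE hk ⟨A, hAc⟩ B hd, ?_⟩
  rw [miss_mk]
  exact ⟨hx, by rw [hB]; simp⟩

lemma exists_invariant {α : Type*} [DecidableEq α] (π : α → α) (hπ : Function.Involutive π)
    (S : Finset α) (hS : ∀ y ∈ S, π y ∈ S) (m : ℕ) (hm : 2 * m ≤ S.card) :
    ∃ A ⊆ S, A.card = 2 * m ∧ ∀ y ∈ A, π y ∈ A := by
  induction m with
  | zero => exact ⟨∅, by simp⟩
  | succ m ih =>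
    obtain ⟨A, hAS, hAc, hA⟩ := ih (by omega)
    have hA' : ∀ y, π y ∈ A → y ∈ A := fun y hy => by simpa [hπ y] using hA _ hy
    have hc : 1 < (S \ A).card := by rw [Finset.card_sdiff_of_subset hAS]; omega
    have fin : ∀ p q, p ∈ S \ A → q ∈ S \ A → p ≠ q → π p ∈ ({p, q} : Finset α) →
        π q ∈ ({p, q} : Finset α) → ∃ A ⊆ S, A.card = 2 * (m + 1) ∧ ∀ y ∈ A, π y ∈ A := by
      intro p q hp hq hpq h1 h2
      simp only [Finset.mem_sdiff, Finset.mem_insert, Finset.mem_singleton] at *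
      refine ⟨insert p (insert q A), ?_, ?_, ?_⟩
      · intro y; simp; grind
      · rw [Finset.card_insert_of_notMem (by simp [hpq, hp.2]),
          Finset.card_insert_of_notMem hq.2]; omega
      · intro y; simp; grind
    by_cases hex : ∃ p ∈ S \ A, π p ≠ p
    · obtain ⟨p, hp, hpp⟩ := hex
      have hp2 := Finset.mem_sdiff.1 hp
      refine fin p (π p) hp (Finset.mem_sdiff.2 ⟨hS _ hp2.1, fun h => hp2.2 (hA' _ h)⟩)
        (Ne.symm hpp) (by simp) (by simp [hπ p])
    · push Not at hex
      obtain ⟨p, hp, q, hq, hpq⟩ := Finset.one_lt_card.1 hc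
      exact fin p q hp hq hpq (by simp [hex p hp]) (by simp [hex q hq])

lemma no_triangle (hk : 2 ≤ k) (A B C : VV k) (h1 : Disjoint A.1 B.1) (h2 : Disjoint A.1 C.1)
    (h3 : Disjoint B.1 C.1) : False := by
  have h := Finset.card_le_card (Finset.subset_univ ((A.1 ∪ B.1) ∪ C.1))
  rw [Finset.card_union_of_disjoint (Finset.disjoint_union_left.2 ⟨h2, h3⟩),
    Finset.card_union_of_disjoint h1, A.2, B.2, C.2, Finset.card_univ, Fintype.card_fin] at h
  omega

/-- Two distinct touching edges both touching `f = CD`, the first through `C`. -/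
lemma touch_through (hk : 2 ≤ k) {f g g' : EE k} {C D : VV k} (hC : C ∈ f.1) (hD : D ∈ f.1)
    (hCD : C ≠ D) (hg : C ∈ g.1) (hgf : g ≠ f) (ht : Touch g' f)
    (ht' : Touch g g') : C ∈ g'.1 := by
  by_contra hcon
  have hf := edge_eq hC hD hCD
  obtain ⟨w, hw, hw'⟩ := ht
  rw [hf, Sym2.mem_iff] at hw'
  rcases hw' with rfl | rfl
  · exact hcon hw
  obtain ⟨P, hP, hP'⟩ := ht'
  have hPC : P ≠ C := fun h => hcon (h ▸ hP')
  have hPD : P ≠ w := by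
    rintro rfl
    exact hgf (Subtype.ext ((edge_eq hg hP hCD).trans hf.symm))
  exact no_triangle hk C w P (edge_disj (by omega) hC hD hCD) (edge_disj (by omega) hg hP hPC.symm)
    (edge_disj (by omega) hw hP' hPD.symm)

lemma involution_fixes (hk : 2 ≤ k) (hev : Even k)
    (σ : (kneserGraph (2 * k + 1) k).lineGraph ≃g (kneserGraph (2 * k + 1) k).lineGraph)
    (hσ : ∀ e, σ (σ e) = e) : ∃ e, σ e = e := by
  have hk0 : 0 < k := by omega
  choose r hr using exists_with_miss hk0
  choose l hl using exists_miss hk0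
  let π : Fin (2 * k + 1) → Fin (2 * k + 1) := fun x => l (σ (r x))
  have hπ : ∀ e x, Miss e x → Miss (σ e) (π x) := fun e x he =>
    same_label' hk σ (r x) e (hr x) he (hl _)
  have hinv : Function.Involutive π := fun x => by
    have h1 := hπ _ _ (hπ _ _ (hr x))
    rw [hσ] at h1
    exact miss_unique hk0 _ h1 (hr x)
  obtain ⟨x, hx⟩ : ∃ x, π x = x := by
    have := Equiv.Perm.exists_fixed_point_of_prime (p := 2) (n := 1) (σ := hinv.toPerm π)
      (by simp) (by ext y; simp [pow_succ, hinv y])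
    simpa using this
  obtain ⟨m, hm⟩ := hev
  obtain ⟨A, hAS, hAc, hA⟩ := exists_invariant π hinv (Finset.univ.erase x)
    (by
      intro y hy
      simp only [Finset.mem_erase, Finset.mem_univ, and_true] at hy ⊢
      intro h
      exact hy (hinv.injective (h.trans hx.symm))) m (by simp; omega)
  have hxA : x ∉ A := fun h => by simpa using hAS h
  have hAk : A.card = k := by omega
  obtain ⟨A, rfl⟩ : ∃ A' : VV k, A'.1 = A := ⟨⟨A, hAk⟩, rfl⟩
  obtain ⟨B, hAB, hB⟩ := exists_compl A hxA
  have hxB : x ∉ B.1 := by rw [hB]; simp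
  have hBi : ∀ y ∈ B.1, π y ∈ B.1 := by
    intro y
    rw [hB]
    simp only [Finset.mem_compl, Finset.mem_insert, not_or]
    rintro ⟨h1, h2⟩
    exact ⟨fun h => h1 (hinv.injective (h.trans hx.symm)),
      fun h => h2 (by simpa [hinv y] using hA _ h)⟩
  refine ⟨mkE hk0 A B hAB, ?_⟩
  set e := mkE hk0 A B hAB with he
  have hex : Miss e x := by rw [he, miss_mk]; exact ⟨hxA, hxB⟩
  have hfx : Miss (σ e) x := by have := hπ e x hex; rwa [hx] at this
  -- the edges through `A` other than `e`
  have hN : ∀ b ∈ B.1, ∃ g : EE k, A ∈ g.1 ∧ Miss g b ∧ g ≠ e := by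
    intro b hb
    have hbA : b ∉ A.1 := Finset.disjoint_right.1 hAB hb
    obtain ⟨B', hd, hB'⟩ := exists_compl A hbA
    have hm : Miss (mkE hk0 A B' hd) b := by
      rw [miss_mk]; exact ⟨hbA, by rw [hB']; simp⟩
    refine ⟨mkE hk0 A B' hd, by simp [mkE], hm, ?_⟩
    intro h
    rw [h] at hm
    exact hxB (miss_unique hk0 _ hex hm ▸ hb)
  have : Nonempty (EE k) := ⟨e⟩
  choose! g hgA hgm hge using hN
  have hAe : A ∈ e.1 := by simp [he, mkE]
  obtain ⟨b0, hb0⟩ := Finset.card_pos.1 (by rw [B.2]; omega : 0 < B.1.card)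
  obtain ⟨C, hC0, hCf⟩ : Touch (σ (g b0)) (σ e) := (touch_map σ _ _).2 ⟨A, hgA b0 hb0, hAe⟩
  obtain ⟨D, hDf, hCD⟩ : ∃ D, D ∈ (σ e).1 ∧ C ≠ D := by
    obtain ⟨P, Q, h, h'⟩ := exists_rep hk0 (σ e)
    have hPQ : P ≠ Q := ((adj_iff hk0 P Q).2 h).ne
    rw [h'] at hCf ⊢
    simp only [mkE, Sym2.mem_iff] at hCf ⊢
    rcases hCf with rfl | rfl
    · exact ⟨Q, Or.inr rfl, hPQ⟩
    · exact ⟨P, Or.inl rfl, hPQ.symm⟩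
  have hall : ∀ b ∈ B.1, C ∈ (σ (g b)).1 := by
    intro b hb
    refine touch_through hk hCf hDf hCD hC0 (fun h => hge b0 hb0 (σ.injective h))
      ((touch_map σ _ _).2 ⟨A, hgA b hb, hAe⟩)
      ((touch_map σ _ _).2 ⟨A, hgA b0 hb0, hgA b hb⟩)
  have hCB : Disjoint C.1 B.1 := by
    rw [Finset.disjoint_right]
    intro b hb
    have := hπ _ _ (hgm _ (hBi b hb)) _ (hall _ (hBi b hb))
    rwa [hinv b] at this
  have hCA : C = A := Subtype.ext
    (eq_of_disj C.2 B.2 A.2 hCB hAB (hfx _ hCf) hxB hxA)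
  have hDB : D = B := by
    refine Subtype.ext (eq_of_disj D.2 A.2 B.2 ?_ hAB.symm (hfx _ hDf) hxA hxB)
    have := edge_disj hk0 hCf hDf hCD
    rw [hCA] at this
    exact this.symm
  apply Subtype.ext
  rw [edge_eq hCf hDf hCD, hCA, hDB, he]
  rfl

lemma even_card_edges (hk : 0 < k) (h4 : 4 ∣ (2 * k + 1).choose k) : 2 ∣ Nat.card (EE k) := by
  classical
  have h1 := (kneserGraph (2 * k + 1) k).sum_degrees_eq_twice_card_edges
  have hdeg : ∀ A : VV k, (kneserGraph (2 * k + 1) k).degree A = k + 1 := by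
    intro A
    have : ((kneserGraph (2 * k + 1) k).neighborFinset A).map (Function.Embedding.subtype _)
        = Finset.powersetCard k (A.1)ᶜ := by
      ext S
      simp only [Finset.mem_map, SimpleGraph.mem_neighborFinset, adj_iff hk,
        Finset.mem_powersetCard, Function.Embedding.subtype_apply]
      constructor
      · rintro ⟨B, hB, rfl⟩
        exact ⟨fun y hy => Finset.mem_compl.2 (Finset.disjoint_right.1 hB hy), B.2⟩
      · rintro ⟨h, hc⟩
        exact ⟨⟨S, hc⟩, Finset.disjoint_right.2 fun y hy => Finset.mem_compl.1 (h hy), rfl⟩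
    rw [← SimpleGraph.card_neighborFinset_eq_degree, ← Finset.card_map, this,
      Finset.card_powersetCard, Finset.card_compl, A.2, Fintype.card_fin,
      show 2 * k + 1 - k = k + 1 by omega, Nat.choose_succ_self_right]
  have hV : Fintype.card (VV k) = (2 * k + 1).choose k := by
    simp
  simp only [hdeg, Finset.sum_const, Finset.card_univ, hV, smul_eq_mul] at h1
  have hE : Nat.card (EE k) = (kneserGraph (2 * k + 1) k).edgeFinset.card := by
    rw [Nat.card_eq_fintype_card, SimpleGraph.edgeFinset_card]
  rw [hE]
  obtain ⟨c, hc⟩ := h4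
  rw [hc] at h1
  exact ⟨c * (k + 1), by linarith⟩

end OddLine

theorem line_graph_odd_graph_not_cayley_of_four_dvd (k : ℕ) (hk : 4 < k) (hkeven : Even k)
    (h4 : 4 ∣ (2 * k + 1).choose k) :
    ¬ IsCayleyGraph (kneserGraph (2 * k + 1) k).lineGraph := by
  rintro ⟨H, hH⟩
  obtain ⟨e0, -⟩ := OddLine.exists_with_miss (by omega : 0 < k) 0
  have hbij : Function.Bijective (fun g : H => g.1 e0) := by
    constructor
    · intro g g' h
      exact (hH e0 _).unique h rfl
    · intro w
      obtain ⟨g, hg, -⟩ := hH e0 w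
      exact ⟨g, hg⟩
  have hcard := Nat.card_congr (Equiv.ofBijective _ hbij)
  have : Finite H := Finite.of_injective _ hbij.1
  have h2 := OddLine.even_card_edges (by omega : 0 < k) h4
  rw [← hcard] at h2
  obtain ⟨g, hg⟩ := exists_prime_orderOf_dvd_card' 2 h2
  have hgg : g * g = 1 := by rw [← sq]; exact orderOf_dvd_iff_pow_eq_one.1 (dvd_of_eq hg)
  obtain ⟨e, he⟩ := OddLine.involution_fixes (by omega) hkeven g.1 (fun e => by
    have := congrArg (fun t : H => t.1 e) hgg
    exact this)
  have h1 : g = 1 := (hH e e).unique he rfl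
  rw [h1, orderOf_one] at hg
  omega
end

section
/- Let k > 4 be an even integer such that k is not of the form 2^t for any integer t ≥ 2. Then the binomial coefficient C(2k+1, k) is divisible by 4. -/
lemma digits_two_sum (k : ℕ) : (Nat.digits 2 k).sum = k % 2 + (Nat.digits 2 (k / 2)).sum := by
  rcases Nat.eq_zero_or_pos k with rfl | hk
  · simp
  · rw [Nat.digits_def' (by norm_num) hk, List.sum_cons]

lemma digits_two_sum_pow (k : ℕ) : 0 < k →
    1 ≤ (Nat.digits 2 k).sum ∧ ((Nat.digits 2 k).sum = 1 → ∃ t : ℕ, k = 2 ^ t) := by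
  induction k using Nat.strong_induction_on with
  | _ k ih =>
    intro hk
    have e := digits_two_sum k
    by_cases h1 : k = 1
    · subst h1
      exact ⟨by simp, fun _ => ⟨0, rfl⟩⟩
    · obtain ⟨a, b⟩ := ih (k / 2) (by omega) (by omega)
      refine ⟨by omega, fun hs => ?_⟩
      obtain ⟨t, ht⟩ := b (by omega)
      refine ⟨t + 1, ?_⟩
      rw [pow_succ]
      omega

theorem four_dvd_choose (k : ℕ) (hk : 4 < k) (hkeven : Even k)
    (h : ¬ ∃ t : ℕ, 2 ≤ t ∧ k = 2 ^ t) :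
    4 ∣ (2 * k + 1).choose k := by
  obtain ⟨a, b⟩ := digits_two_sum_pow k (by omega)
  have h2 : (Nat.digits 2 k).sum ≠ 1 := by
    intro hs
    obtain ⟨t, ht⟩ := b hs
    refine h ⟨t, ?_, ht⟩
    by_contra hlt
    have : t = 0 ∨ t = 1 := by omega
    rcases this with rfl | rfl <;> omega
  have hmod : k % 2 = 0 := Nat.even_iff.mp hkeven
  haveI : Fact (Nat.Prime 2) := ⟨Nat.prime_two⟩
  have key := sub_one_mul_padicValNat_choose_eq_sub_sum_digits' (p := 2) (k := k) (n := k + 1)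
  have e1 := digits_two_sum k
  have e2 := digits_two_sum (k + 1)
  have e3 := digits_two_sum (k + 1 + k)
  rw [show (k + 1) / 2 = k / 2 by omega] at e2
  rw [show (k + 1 + k) / 2 = k by omega] at e3
  rw [show 2 * k + 1 = k + 1 + k by ring]
  have hv : 2 ≤ padicValNat 2 ((k + 1 + k).choose k) := by omega
  exact (pow_dvd_pow 2 hv).trans pow_padicValNat_dvd
end

section
/- Let k > 4 be an even integer such that k is not of the form 2^t for any integer t > 2. Then the line graph L(O_{k+1}) of the odd graph O_{k+1} is not a Cayley graph; that is, no subgroup of the automorphism group of L(O_{k+1}) acts regularly (freely and transitively) on its vertex set. -/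
open scoped Pointwise

section general

variable {V : Type*} {G : SimpleGraph V}

/-- The edges through a vertex. -/
def edgeStar (G : SimpleGraph V) (v : V) : Set G.edgeSet := {e | v ∈ e.1}

theorem edgeStar_sub (hdeg : ∀ v, ∃ a b, a ≠ b ∧ G.Adj v a ∧ G.Adj v b)
    (htri : ∀ a b c, G.Adj a b → G.Adj b c → G.Adj a c → False)
    (φ : G.lineGraph ≃g G.lineGraph) (v : V) :
    ∃ w, ∀ e : G.edgeSet, v ∈ e.1 → w ∈ (φ e).1 := by
  have meet : ∀ e f : G.edgeSet, v ∈ e.1 → v ∈ f.1 → ∃ p, p ∈ (φ e).1 ∧ p ∈ (φ f).1 := by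
    intro e f he hf
    by_cases hef : e = f
    · subst hef
      exact ⟨_, Sym2.out_fst_mem _, Sym2.out_fst_mem _⟩
    · have : G.lineGraph.Adj e f := ⟨hef, v, he, hf⟩
      obtain ⟨_, p, hp, hq⟩ := φ.map_rel_iff.2 this
      exact ⟨p, hp, hq⟩
  obtain ⟨a, b, hab, ha, hb⟩ := hdeg v
  set e1 : G.edgeSet := ⟨s(v, a), ha⟩ with he1
  set e2 : G.edgeSet := ⟨s(v, b), hb⟩ with he2
  have hv1 : v ∈ e1.1 := by simp [he1]
  have hv2 : v ∈ e2.1 := by simp [he2]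
  have hne : e1 ≠ e2 := by
    intro h
    have := congrArg Subtype.val h
    simp only [he1, he2, Sym2.congr_right] at this
    exact hab this
  obtain ⟨w, hw1, hw2⟩ := meet e1 e2 hv1 hv2
  refine ⟨w, fun e he => ?_⟩
  by_contra hwe
  obtain ⟨p, hp, hp1⟩ := meet e e1 he hv1
  obtain ⟨q, hq, hq2⟩ := meet e e2 he hv2
  have hpw : p ≠ w := fun h => hwe (h ▸ hp)
  have hqw : q ≠ w := fun h => hwe (h ▸ hq)
  have h1 : (φ e1).1 = s(w, p) := ((Sym2.mem_and_mem_iff hpw.symm).1 ⟨hw1, hp1⟩)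
  have h2 : (φ e2).1 = s(w, q) := ((Sym2.mem_and_mem_iff hqw.symm).1 ⟨hw2, hq2⟩)
  have hpq : p ≠ q := by
    rintro rfl
    exact hne (φ.injective (Subtype.ext (h1.trans h2.symm)))
  have h3 : (φ e).1 = s(p, q) := ((Sym2.mem_and_mem_iff hpq).1 ⟨hp, hq⟩)
  have a1 := (φ e1).2
  have a2 := (φ e2).2
  have a3 := (φ e).2
  rw [h1] at a1
  rw [h2] at a2
  rw [h3] at a3
  exact htri w p q a1 a3 a2

theorem edgeStar_subset (hdeg : ∀ v, ∃ a b, a ≠ b ∧ G.Adj v a ∧ G.Adj v b)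
    {v w : V} (h : edgeStar G v ⊆ edgeStar G w) : v = w := by
  obtain ⟨a, b, hab, ha, hb⟩ := hdeg v
  have h1 : w ∈ s(v, a) := @h ⟨s(v, a), ha⟩ (by simp [edgeStar])
  have h2 : w ∈ s(v, b) := @h ⟨s(v, b), hb⟩ (by simp [edgeStar])
  simp only [Sym2.mem_iff] at h1 h2
  grind

theorem smul_edgeStar (hdeg : ∀ v, ∃ a b, a ≠ b ∧ G.Adj v a ∧ G.Adj v b)
    (htri : ∀ a b c, G.Adj a b → G.Adj b c → G.Adj a c → False)
    (φ : G.lineGraph ≃g G.lineGraph) (v : V) :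
    ∃ w, φ • edgeStar G v = edgeStar G w := by
  obtain ⟨w, hw⟩ := edgeStar_sub hdeg htri φ v
  obtain ⟨u, hu⟩ := edgeStar_sub hdeg htri φ⁻¹ w
  have huv : v = u := by
    apply edgeStar_subset hdeg
    intro e he
    have := hu _ (hw e he)
    have h2 : φ⁻¹ (φ e) = e := inv_smul_smul φ e
    rwa [h2] at this
  refine ⟨w, Set.Subset.antisymm ?_ ?_⟩
  · rintro _ ⟨e, he, rfl⟩
    exact hw e he
  · intro e he
    rw [Set.mem_smul_set_iff_inv_smul_mem]
    rw [huv]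
    exact hu e he

theorem general_not_cayley [Finite V] [Nonempty V]
    (hdeg : ∀ v, ∃ a b, a ≠ b ∧ G.Adj v a ∧ G.Adj v b)
    (htri : ∀ a b c, G.Adj a b → G.Adj b c → G.Adj a c → False)
    (hcol : ∀ c : V → Prop, ∃ a b, G.Adj a b ∧ (c a ↔ c b))
    (hcard : ¬ Nat.card V ∣ Nat.card G.edgeSet) :
    ¬ IsCayleyGraph G.lineGraph := by
  rintro ⟨H, hH⟩
  obtain ⟨v0⟩ := ‹Nonempty V›
  obtain ⟨b0, _, _, hb0, _⟩ := hdeg v0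
  set e0 : G.edgeSet := ⟨s(v0, b0), hb0⟩ with he0
  have hHE : Nat.card H = Nat.card G.edgeSet := by
    apply Nat.card_eq_of_bijective (fun g : H => (g : G.lineGraph ≃g G.lineGraph) e0)
    constructor
    · intro g g' hg
      exact (hH e0 ((g' : G.lineGraph ≃g G.lineGraph) e0)).unique hg rfl
    · intro e
      exact (hH e0 e).exists
  have hsm : ∀ (g : H) v, ∃ w, g • edgeStar G v = edgeStar G w :=
    fun g v => smul_edgeStar hdeg htri g.1 v
  -- every edge is a translate of the base edge
  have key : ∀ v w, G.Adj v w →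
      (edgeStar G v ∈ MulAction.orbit H (edgeStar G v0) ∧
        edgeStar G w ∈ MulAction.orbit H (edgeStar G b0)) ∨
      (edgeStar G w ∈ MulAction.orbit H (edgeStar G v0) ∧
        edgeStar G v ∈ MulAction.orbit H (edgeStar G b0)) := by
    intro v w hvw
    obtain ⟨g, hg⟩ := (hH e0 ⟨s(v, w), hvw⟩).exists
    obtain ⟨x, hx⟩ := hsm g v0
    obtain ⟨y, hy⟩ := hsm g b0
    have hge : g • e0 = (⟨s(v, w), hvw⟩ : G.edgeSet) := hg
    have hxm : x ∈ s(v, w) := by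
      have : g • e0 ∈ edgeStar G x := by
        rw [← hx]; exact Set.smul_mem_smul_set (by simp [edgeStar, he0])
      rwa [hge] at this
    have hym : y ∈ s(v, w) := by
      have : g • e0 ∈ edgeStar G y := by
        rw [← hy]; exact Set.smul_mem_smul_set (by simp [edgeStar, he0])
      rwa [hge] at this
    have hxy : x ≠ y := by
      rintro rfl
      have h1 := smul_left_cancel g (hx.trans hy.symm)
      exact hb0.ne (edgeStar_subset hdeg h1.le)
    have ox : edgeStar G x ∈ MulAction.orbit H (edgeStar G v0) := ⟨g, hx⟩
    have oy : edgeStar G y ∈ MulAction.orbit H (edgeStar G b0) := ⟨g, hy⟩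
    rw [Sym2.mem_iff] at hxm hym
    rcases hxm with rfl | rfl <;> rcases hym with rfl | rfl
    · exact absurd rfl hxy
    · exact Or.inl ⟨ox, oy⟩
    · exact Or.inr ⟨ox, oy⟩
    · exact absurd rfl hxy
  by_cases hor : MulAction.orbit H (edgeStar G b0) = MulAction.orbit H (edgeStar G v0)
  · have horb : MulAction.orbit H (edgeStar G v0) = Set.range (edgeStar G) := by
      ext S
      constructor
      · rintro ⟨g, rfl⟩
        obtain ⟨w, hw⟩ := hsm g v0
        exact ⟨w, hw.symm⟩
      · rintro ⟨v, rfl⟩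
        obtain ⟨a, _, _, ha, _⟩ := hdeg v
        rcases key v a ha with h | h
        · exact h.1
        · rw [← hor]; exact h.2
    apply hcard
    have hinj : Function.Injective (edgeStar G) := fun v w h => edgeStar_subset hdeg h.le
    have h1 := MulAction.index_stabilizer H (edgeStar G v0)
    rw [horb, ← Nat.card_coe_set_eq, Nat.card_range_of_injective hinj] at h1
    rw [← hHE, ← h1]
    exact Subgroup.index_dvd_card _
  · obtain ⟨a, b, hab, hc⟩ := hcol fun v => edgeStar G v ∈ MulAction.orbit H (edgeStar G v0)
    have tr : ∀ v, edgeStar G v ∈ MulAction.orbit H (edgeStar G v0) →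
        edgeStar G v ∈ MulAction.orbit H (edgeStar G b0) → False := by
      intro v h1 h2
      exact hor ((MulAction.orbit_eq_iff.2 h2).symm.trans (MulAction.orbit_eq_iff.2 h1))
    rcases key a b hab with h | h
    · exact tr b (hc.1 h.1) h.2
    · exact tr a (hc.2 h.1) h.2

end general

theorem kneser_adj_s11 {k : ℕ} (hk : 0 < k) {n : ℕ} (a b : {s : Finset (Fin n) // s.card = k}) :
    (kneserGraph n k).Adj a b ↔ Disjoint a.1 b.1 := by
  simp only [kneserGraph, SimpleGraph.fromRel_adj]
  constructor
  · rintro ⟨_, h | h⟩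
    · exact h
    · exact h.symm
  · intro h
    refine ⟨?_, Or.inl h⟩
    rintro rfl
    rw [disjoint_self, Finset.bot_eq_empty, ← Finset.card_eq_zero, a.2] at h
    omega

theorem kneser_degree {k : ℕ} (hk : 0 < k) (v : {s : Finset (Fin (2 * k + 1)) // s.card = k})
    [Fintype ((kneserGraph (2 * k + 1) k).neighborSet v)] :
    (kneserGraph (2 * k + 1) k).degree v = k + 1 := by
  have h : (((kneserGraph (2 * k + 1) k).neighborFinset v).map (Function.Embedding.subtype _)) =
      Finset.powersetCard k v.1ᶜ := by
    ext s
    simp only [Finset.mem_map, SimpleGraph.mem_neighborFinset, kneser_adj_s11 hk,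
      Finset.mem_powersetCard, Function.Embedding.coe_subtype]
    rw [← Finset.le_iff_subset, le_compl_iff_disjoint_left]
    constructor
    · rintro ⟨w, hw, rfl⟩
      exact ⟨hw, w.2⟩
    · rintro ⟨h1, h2⟩
      exact ⟨⟨s, h2⟩, h1, rfl⟩
  have h2 := congrArg Finset.card h
  rw [Finset.card_map, Finset.card_powersetCard, Finset.card_compl, v.2, Fintype.card_fin] at h2
  rw [← SimpleGraph.card_neighborFinset_eq_degree, h2,
    show 2 * k + 1 - k = k + 1 by omega, Nat.choose_succ_self_right]

theorem kneser_color {k : ℕ} (hk : 0 < k)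
    (c : {s : Finset (Fin (2 * k + 1)) // s.card = k} → Prop) :
    ∃ a b, (kneserGraph (2 * k + 1) k).Adj a b ∧ (c a ↔ c b) := by
  by_contra! hcon
  have hcon' : ∀ a b, Disjoint a.1 b.1 → ¬ (c a ↔ c b) := by
    intro a b h
    have := hcon a b ((kneser_adj_s11 hk a b).2 h)
    tauto
  -- intervals
  let A : ℕ → Finset (Fin (2 * k + 1)) := fun i => Finset.univ.filter fun x => i ≤ x.1 ∧ x.1 < i + k
  have hA : ∀ i, i ≤ k + 1 → (A i).card = k := by
    intro i hi
    have : (A i).map Fin.valEmbedding = Finset.Ico i (i + k) := by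
      ext x
      simp only [A, Finset.mem_map, Finset.mem_filter, Finset.mem_univ, true_and,
        Fin.valEmbedding_apply, Finset.mem_Ico]
      constructor
      · rintro ⟨y, hy, rfl⟩; exact hy
      · intro hx; exact ⟨⟨x, by omega⟩, hx, rfl⟩
    have h2 := congrArg Finset.card this
    rw [Finset.card_map, Nat.card_Ico] at h2
    omega
  have step : ∀ i (hi : i + 1 ≤ k + 1), c ⟨A i, hA i (by omega)⟩ ↔ c ⟨A (i + 1), hA _ hi⟩ := by
    intro i hi
    let B : Finset (Fin (2 * k + 1)) := Finset.univ.filter fun x => ¬ (i ≤ x.1 ∧ x.1 < i + (k + 1))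
    have hB : B.card = k := by
      have : Bᶜ.map Fin.valEmbedding = Finset.Ico i (i + (k + 1)) := by
        ext x
        simp only [B, Finset.mem_map, Finset.mem_compl, Finset.mem_filter, Finset.mem_univ,
          true_and, Fin.valEmbedding_apply, Finset.mem_Ico, not_not]
        constructor
        · rintro ⟨y, hy, rfl⟩; exact hy
        · intro hx; exact ⟨⟨x, by omega⟩, hx, rfl⟩
      have h2 := congrArg Finset.card this
      rw [Finset.card_map, Nat.card_Ico, Finset.card_compl, Fintype.card_fin] at h2
      omega
    have h1 := hcon' ⟨A i, hA i (by omega)⟩ ⟨B, hB⟩ (by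
      rw [Finset.disjoint_left]; intro x hx hx'
      simp only [A, B, Finset.mem_filter, Finset.mem_univ, true_and] at hx hx'
      omega)
    have h2 := hcon' ⟨A (i + 1), hA _ hi⟩ ⟨B, hB⟩ (by
      rw [Finset.disjoint_left]; intro x hx hx'
      simp only [A, B, Finset.mem_filter, Finset.mem_univ, true_and] at hx hx'
      omega)
    tauto
  have all : ∀ i (hi : i ≤ k + 1), c ⟨A 0, hA 0 (by omega)⟩ ↔ c ⟨A i, hA i hi⟩ := by
    intro i
    induction i with
    | zero => intro _; rfl
    | succ n ih => intro hi; exact (ih (by omega)).trans (step n hi)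
  refine hcon' _ _ ?_ (all k (by omega))
  rw [Finset.disjoint_left]; intro x hx hx'
  simp only [A, Finset.mem_filter, Finset.mem_univ, true_and] at hx hx'
  omega

theorem line_graph_odd_graph_not_cayley (k : ℕ) (hk : 4 < k) (hkeven : Even k)
    (h : ¬ ∃ t : ℕ, 2 < t ∧ k = 2 ^ t) :
    ¬ IsCayleyGraph (kneserGraph (2 * k + 1) k).lineGraph := by
  classical
  have hk0 : 0 < k := by omega
  have hne : Nonempty {s : Finset (Fin (2 * k + 1)) // s.card = k} := by
    obtain ⟨a, _⟩ := kneser_color hk0 (fun _ => True)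
    exact ⟨a⟩
  apply general_not_cayley
  · intro v
    have h1 : 1 < ((kneserGraph (2 * k + 1) k).neighborFinset v).card := by
      rw [SimpleGraph.card_neighborFinset_eq_degree, kneser_degree hk0]; omega
    obtain ⟨a, ha, b, hb, hab⟩ := Finset.one_lt_card.1 h1
    exact ⟨a, b, hab, by simpa using ha, by simpa using hb⟩
  · intro a b c hab hbc hac
    rw [kneser_adj_s11 hk0] at hab hbc hac
    have h1 := Finset.card_le_univ ((a.1 ∪ b.1) ∪ c.1)
    rw [Finset.card_union_of_disjoint (Finset.disjoint_union_left.2 ⟨hac, hbc⟩),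
      Finset.card_union_of_disjoint hab, a.2, b.2, c.2, Fintype.card_fin] at h1
    omega
  · exact kneser_color hk0
  · rintro ⟨m, hm⟩
    have h1 := (kneserGraph (2 * k + 1) k).sum_degrees_eq_twice_card_edges
    simp only [kneser_degree hk0, Finset.sum_const, smul_eq_mul, Finset.card_univ] at h1
    rw [← SimpleGraph.coe_edgeFinset, Nat.card_coe_set_eq, Set.ncard_coe_finset,
      Nat.card_eq_fintype_card] at hm
    rw [hm, Nat.mul_left_comm] at h1
    have h2 := Nat.eq_of_mul_eq_mul_left Fintype.card_pos h1
    obtain ⟨j, hj⟩ := hkeven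
    omega
end
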